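/- Let n ≥ 1 and let Ω ⊂ ℝⁿ be a bounded domain. Assume the standing hypotheses on f and V, with f moreover of class C² and convex on [0,∞) and with 1 < p < p_S. Let T > 0 and let u be a nonnegative classical solution of u_t = Δu + V(x)f(u) on (0,T)×Ω with ∂_t u ≥ 0 everywhere. Let x₀ ∈ Ω satisfy V(x₀) = 0 and assume that the connected component of {x ∈ closure(Ω) : V(x) = 0} containing x₀ does not intersect ∂Ω. If x₀ is a blowup point of u, then blowup is of type I near x₀: there exist M > 0 and ρ > 0 with B(x₀,ρ) ⊆ Ω such that u(t,x) ≤ M(T−t)^{−α} for all (t,x) ∈ (0,T)×B(x₀,ρ). -/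

import Mathlib

open Set Metric Filter

noncomputable def lap {n : ℕ} (g : EuclideanSpace ℝ (Fin n) → ℝ)
    (x : EuclideanSpace ℝ (Fin n)) : ℝ :=
  ∑ i : Fin n, fderiv ℝ (fun y => fderiv ℝ g y (EuclideanSpace.single i 1)) x
    (EuclideanSpace.single i 1)

/-! If `u` is constant in time it is locally bounded, so there is nothing to show; otherwise `u`
increases strictly at some point, and by the minimum principle, applied to its forward difference
quotients and spread through the domain by moving bumps, at every point at a later time. Choose a
cutoff `φ` with compact support in `Ω`, equal to `1` near the component of `{V = 0}` at `x₀`, such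
that `V` is bounded below by a positive constant wherever `φ` is not locally constant `1`. With
`F(s) = f(s) + s ^ q`, `1 < q < p`, the function `φ ^ m * F(u)` satisfies
`∂ₜ - Δ - V * f'(u) ≤ 0` wherever it is large: near the component of `x₀` by convexity, elsewhere
because the gain of order `V * u ^ (p + q - 1)` coming from the power `q` absorbs the error terms of
the cutoff. Comparing difference quotients with `δ * φ ^ m * F(u)` and passing to the limit gives
`∂ₜu ≥ δ * f(u)` near `x₀`, and integrating this differential inequality up to the blowup time
yields the type I rate. -/

section Development

open scoped Topology Gradient RealInnerProductSpace Manifold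

variable {n : ℕ}

local notation:max "𝔼" n:max => EuclideanSpace ℝ (Fin n)

/-! ### Calculus of the Laplacian -/

section Laplacian

variable {g h : 𝔼 n → ℝ} {x : 𝔼 n}

lemma sum_fderiv_single_mul_fderiv_single (g h : 𝔼 n → ℝ) (x : 𝔼 n) :
    ∑ i, fderiv ℝ g x (EuclideanSpace.single i 1) * fderiv ℝ h x (EuclideanSpace.single i 1) =
      ⟪∇ g x, ∇ h x⟫ := by
  rw [← (EuclideanSpace.basisFun (Fin n) ℝ).sum_inner_mul_inner]
  simp [inner_gradient_left, inner_gradient_right]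

lemma differentiableAt_fderiv_apply (hg : ContDiffAt ℝ 2 g x) (v : 𝔼 n) :
    DifferentiableAt ℝ (fun y => fderiv ℝ g y v) x :=
  ((hg.fderiv_right (m := 1) le_rfl).differentiableAt one_ne_zero).clm_apply
    (differentiableAt_const v)

lemma eventually_differentiableAt_of_contDiffAt_two (hg : ContDiffAt ℝ 2 g x) :
    ∀ᶠ y in 𝓝 x, DifferentiableAt ℝ g y :=
  (hg.eventually (by simp)).mono fun _ hy => hy.differentiableAt two_ne_zero

lemma lap_congr (hgh : g =ᶠ[𝓝 x] h) : lap g x = lap h x := by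
  have hpartial : ∀ v : 𝔼 n, (fun y => fderiv ℝ g y v) =ᶠ[𝓝 x] fun y => fderiv ℝ h y v :=
    fun v => (hgh.fderiv (𝕜 := ℝ)).mono fun _ hy => congrArg (fun A => A v) hy
  simp only [lap, (hpartial _).fderiv_eq]

lemma lap_const (c : ℝ) : lap (fun _ : 𝔼 n => c) x = 0 := by
  simp [lap]

lemma lap_mul (hg : ContDiffAt ℝ 2 g x) (hh : ContDiffAt ℝ 2 h x) :
    lap (fun y => g y * h y) x = g x * lap h x + 2 * ⟪∇ g x, ∇ h x⟫ + h x * lap g x := by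
  have hpartial : ∀ v : 𝔼 n, fderiv ℝ (fun y => fderiv ℝ (fun z => g z * h z) y v) x v =
      g x * fderiv ℝ (fun y => fderiv ℝ h y v) x v + 2 * (fderiv ℝ g x v * fderiv ℝ h x v) +
        h x * fderiv ℝ (fun y => fderiv ℝ g y v) x v := by
    intro v
    have hfirst : (fun y => fderiv ℝ (fun z => g z * h z) y v) =ᶠ[𝓝 x]
        fun y => g y * fderiv ℝ h y v + h y * fderiv ℝ g y v := by
      filter_upwards [eventually_differentiableAt_of_contDiffAt_two hg,
        eventually_differentiableAt_of_contDiffAt_two hh] with y hgy hhy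
      simp [fderiv_fun_mul hgy hhy]
    have hg1 := hg.differentiableAt two_ne_zero
    have hh1 := hh.differentiableAt two_ne_zero
    have hg2 := differentiableAt_fderiv_apply hg v
    have hh2 := differentiableAt_fderiv_apply hh v
    rw [hfirst.fderiv_eq, fderiv_fun_add (hg1.fun_mul hh2) (hh1.fun_mul hg2),
      fderiv_fun_mul hg1 hh2, fderiv_fun_mul hh1 hg2]
    simp only [add_apply, smul_apply, smul_eq_mul]
    ring
  simp only [lap, hpartial, Finset.sum_add_distrib, ← Finset.mul_sum,
    sum_fderiv_single_mul_fderiv_single]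

lemma lap_const_mul (c : ℝ) (hg : ContDiffAt ℝ 2 g x) :
    lap (fun y => c * g y) x = c * lap g x := by
  rw [lap_mul contDiffAt_const hg, lap_const, gradient_fun_const]
  simp

lemma lap_sub (hg : ContDiffAt ℝ 2 g x) (hh : ContDiffAt ℝ 2 h x) :
    lap (fun y => g y - h y) x = lap g x - lap h x := by
  have hpartial : ∀ v : 𝔼 n, fderiv ℝ (fun y => fderiv ℝ (fun z => g z - h z) y v) x v =
      fderiv ℝ (fun y => fderiv ℝ g y v) x v - fderiv ℝ (fun y => fderiv ℝ h y v) x v := by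
    intro v
    have hfirst : (fun y => fderiv ℝ (fun z => g z - h z) y v) =ᶠ[𝓝 x]
        fun y => fderiv ℝ g y v - fderiv ℝ h y v := by
      filter_upwards [eventually_differentiableAt_of_contDiffAt_two hg,
        eventually_differentiableAt_of_contDiffAt_two hh] with y hgy hhy
      simp [fderiv_fun_sub hgy hhy]
    rw [hfirst.fderiv_eq, fderiv_fun_sub (differentiableAt_fderiv_apply hg v)
      (differentiableAt_fderiv_apply hh v), sub_apply]
  simp only [lap, hpartial, Finset.sum_sub_distrib]

lemma fderiv_comp_real_apply {F : ℝ → ℝ} (hF : DifferentiableAt ℝ F (g x))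
    (hg : DifferentiableAt ℝ g x) (v : 𝔼 n) :
    fderiv ℝ (fun y => F (g y)) x v = deriv F (g x) * fderiv ℝ g x v := by
  have := (hF.hasDerivAt.comp_hasFDerivAt x hg.hasFDerivAt).fderiv
  simp only [Function.comp_def] at this
  simp [this]

lemma gradient_comp_real {F : ℝ → ℝ} (hF : DifferentiableAt ℝ F (g x))
    (hg : DifferentiableAt ℝ g x) :
    ∇ (fun y => F (g y)) x = deriv F (g x) • ∇ g x := by
  refine ext_inner_right ℝ fun v => ?_
  rw [inner_gradient_left, fderiv_comp_real_apply hF hg, real_inner_smul_left, inner_gradient_left]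

lemma lap_comp {F : ℝ → ℝ} (hF : ContDiffAt ℝ 2 F (g x)) (hg : ContDiffAt ℝ 2 g x) :
    lap (fun y => F (g y)) x = deriv (deriv F) (g x) * ‖∇ g x‖ ^ 2 + deriv F (g x) * lap g x := by
  have hF' : DifferentiableAt ℝ (deriv F) (g x) :=
    (hF.derivWithin (m := 1) le_rfl).differentiableAt one_ne_zero
  have hpartial : ∀ v : 𝔼 n, fderiv ℝ (fun y => fderiv ℝ (fun z => F (g z)) y v) x v =
      deriv (deriv F) (g x) * (fderiv ℝ g x v * fderiv ℝ g x v) +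
        deriv F (g x) * fderiv ℝ (fun y => fderiv ℝ g y v) x v := by
    intro v
    have hfirst : (fun y => fderiv ℝ (fun z => F (g z)) y v) =ᶠ[𝓝 x]
        fun y => deriv F (g y) * fderiv ℝ g y v := by
      filter_upwards [eventually_differentiableAt_of_contDiffAt_two hg,
        hg.continuousAt.eventually (hF.eventually (by simp))] with y hgy hFy
      exact fderiv_comp_real_apply (hFy.differentiableAt two_ne_zero) hgy v
    have hg1 := hg.differentiableAt two_ne_zero
    rw [hfirst.fderiv_eq, fderiv_fun_mul (hF'.fun_comp' x hg1)
      (differentiableAt_fderiv_apply hg v)]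
    simp only [add_apply, smul_apply, smul_eq_mul,
      fderiv_comp_real_apply hF' hg1]
    ring
  simp only [lap, hpartial, Finset.sum_add_distrib, ← Finset.mul_sum,
    sum_fderiv_single_mul_fderiv_single, real_inner_self_eq_norm_sq]

lemma gradient_norm_sub_sq (x y : 𝔼 n) : ∇ (fun z => ‖z - y‖ ^ 2) x = (2 : ℝ) • (x - y) := by
  refine ext_inner_right ℝ fun v => ?_
  have : HasFDerivAt (fun z : 𝔼 n => ‖z - y‖ ^ 2) _ x := ((hasFDerivAt_id x).sub_const y).norm_sq
  rw [inner_gradient_left, this.fderiv]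
  simp [inner_smul_left, inner_sub_left]

lemma lap_norm_sub_sq (x y : 𝔼 n) : lap (fun z => ‖z - y‖ ^ 2) x = 2 * n := by
  have hfirst : ∀ z v : 𝔼 n, fderiv ℝ (fun z => ‖z - y‖ ^ 2) z v = 2 * ⟪v, z - y⟫ := by
    intro z v
    rw [← inner_gradient_left, gradient_norm_sub_sq, real_inner_smul_left, real_inner_comm]
  have hsecond : ∀ v : 𝔼 n, HasFDerivAt (fun z : 𝔼 n => 2 * ⟪v, z - y⟫) ((2 : ℝ) • innerSL ℝ v) x :=
    fun v => (((innerSL ℝ v).hasFDerivAt (x := x - y)).comp x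
      ((hasFDerivAt_id x).sub_const y)).const_mul 2
  simp [lap, hfirst, (hsecond _).fderiv, mul_comm]

lemma continuousAt_lap (hg : ContDiffAt ℝ 2 g x) : ContinuousAt (lap g) x := by
  refine tendsto_finsetSum _ fun i _ => ?_
  have h1 : ContDiffAt ℝ 1 (fun y => fderiv ℝ g y (EuclideanSpace.single i 1)) x :=
    (hg.fderiv_right (m := 1) le_rfl).clm_apply contDiffAt_const
  exact (h1.fderiv_right (m := 0) le_rfl).continuousAt.clm_apply continuousAt_const

lemma continuous_lap (hg : ContDiff ℝ 2 g) : Continuous (lap g) :=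
  continuous_iff_continuousAt.2 fun _ => continuousAt_lap hg.contDiffAt

lemma deriv_deriv_nonneg_of_isLocalMin {γ : ℝ → ℝ} {r : ℝ} (hmin : IsLocalMin γ r)
    (hγ : ContinuousAt γ r) : 0 ≤ deriv (deriv γ) r := by
  by_contra! hneg
  have hmax := isLocalMax_of_deriv_deriv_neg hneg hmin.deriv_eq_zero hγ
  have hconst : γ =ᶠ[𝓝 r] fun _ => γ r := by
    filter_upwards [hmin, hmax] with s h1 h2 using le_antisymm h2 h1
  have hconst' : deriv γ =ᶠ[𝓝 r] fun _ => 0 :=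
    hconst.deriv.mono fun s hs => by rw [hs, deriv_const]
  rw [hconst'.deriv_eq, deriv_const] at hneg
  exact hneg.false

lemma lap_nonneg_of_isLocalMin (hmin : IsLocalMin g x) (hg : ContDiffAt ℝ 2 g x) :
    0 ≤ lap g x := by
  refine Finset.sum_nonneg fun i _ => ?_
  set v : 𝔼 n := EuclideanSpace.single i 1
  have hline : ∀ r : ℝ, HasDerivAt (fun r : ℝ => x + r • v) v r := fun r => by
    simpa using ((hasDerivAt_id r).smul_const v).const_add x
  have hcont : Tendsto (fun r : ℝ => x + r • v) (𝓝 0) (𝓝 x) := by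
    simpa using (hline 0).continuousAt.tendsto
  have hfirst : deriv (fun r : ℝ => g (x + r • v)) =ᶠ[𝓝 0] fun r => fderiv ℝ g (x + r • v) v := by
    filter_upwards [hcont.eventually (eventually_differentiableAt_of_contDiffAt_two hg)] with r hr
    exact (hr.hasFDerivAt.comp_hasDerivAt r (hline r)).deriv
  have hsecond : HasDerivAt (fun r : ℝ => fderiv ℝ g (x + r • v) v)
      (fderiv ℝ (fun y => fderiv ℝ g y v) x v) 0 := by
    have h0 : DifferentiableAt ℝ (fun y => fderiv ℝ g y v) (x + (0 : ℝ) • v) := by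
      simpa using differentiableAt_fderiv_apply hg v
    simpa [Function.comp_def] using h0.hasFDerivAt.comp_hasDerivAt 0 (hline 0)
  rw [← hsecond.deriv, ← hfirst.deriv_eq]
  have hg0 : ContinuousAt g (x + (0 : ℝ) • v) := by simpa using hg.continuousAt
  refine deriv_deriv_nonneg_of_isLocalMin ?_
    (ContinuousAt.comp (f := fun r : ℝ => x + r • v) hg0 (hline 0).continuousAt)
  have hmin' : ∀ᶠ r in 𝓝 (0 : ℝ), g x ≤ g (x + r • v) := hcont.eventually hmin
  simpa [IsLocalMin, IsMinFilter] using hmin'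

end Laplacian

/-! ### The parabolic minimum principle -/

section MinimumPrinciple

lemma hasDerivAt_nonpos_of_left_min {w : ℝ → ℝ} {w' a t : ℝ} (hw : HasDerivAt w w' t) (ha : a < t)
    (hmin : ∀ s ∈ Icc a t, w t ≤ w s) : w' ≤ 0 := by
  refine le_of_tendsto (hasDerivAt_iff_tendsto_slope_left_right.1 hw).1 ?_
  filter_upwards [Ioo_mem_nhdsLT ha] with s hs
  rw [slope_def_field]
  exact div_nonpos_of_nonneg_of_nonpos (sub_nonneg.2 (hmin s ⟨hs.1.le, hs.2.le⟩))
    (sub_nonpos.2 hs.2.le)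

lemma parabolic_minimum_principle {K : Set (𝔼 n)} (hK : IsCompact K) {J : ℝ → 𝔼 n → ℝ}
    {a b lam : ℝ} (hJ : ContinuousOn (fun z : ℝ × 𝔼 n => J z.1 z.2) (Icc a b ×ˢ K))
    (hneg : ∀ t ∈ Icc a b, ∀ x ∈ K, J t x < 0 → a < t ∧ x ∈ interior K ∧
      DifferentiableAt ℝ (fun s => J s x) t ∧ ContDiffAt ℝ 2 (J t) x ∧
      lam * J t x < deriv (fun s => J s x) t - lap (J t) x) :
    ∀ t ∈ Icc a b, ∀ x ∈ K, 0 ≤ J t x := by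
  by_contra! ⟨t₁, ht₁, x₁, hx₁, hJ₁⟩
  set w : ℝ × 𝔼 n → ℝ := fun z => Real.exp (-lam * z.1) * J z.1 z.2
  have hw : ContinuousOn w (Icc a b ×ˢ K) :=
    (by fun_prop : Continuous fun z : ℝ × 𝔼 n => Real.exp (-lam * z.1)).continuousOn.mul hJ
  obtain ⟨⟨t, x⟩, ⟨ht, hx⟩, hmin⟩ :=
    (isCompact_Icc.prod hK).exists_isMinOn ⟨(t₁, x₁), ht₁, hx₁⟩ hw
  have hmin' : ∀ s ∈ Icc a b, ∀ y ∈ K, w (t, x) ≤ w (s, y) := fun s hs y hy => hmin ⟨hs, hy⟩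
  have hJneg : J t x < 0 :=
    neg_of_mul_neg_right
      ((hmin' t₁ ht₁ x₁ hx₁).trans_lt (mul_neg_of_pos_of_neg (Real.exp_pos _) hJ₁))
      (Real.exp_pos _).le
  obtain ⟨hat, hxK, hdiff, hcd, hineq⟩ := hneg t ht x hx hJneg
  have hlap : 0 ≤ lap (J t) x := by
    refine lap_nonneg_of_isLocalMin ?_ hcd
    filter_upwards [mem_interior_iff_mem_nhds.1 hxK] with y hy
    exact le_of_mul_le_mul_left (hmin' t ht y hy) (Real.exp_pos _)
  have htime : Real.exp (-lam * t) * (deriv (fun s => J s x) t - lam * J t x) ≤ 0 := by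
    refine hasDerivAt_nonpos_of_left_min (w := fun s => w (s, x)) ?_ hat
      fun s hs => hmin' s ⟨hs.1, hs.2.trans ht.2⟩ x hx
    refine ((((hasDerivAt_id t).const_mul (-lam)).exp).mul hdiff.hasDerivAt).congr_deriv ?_
    simp only [id]
    ring
  linarith [nonpos_of_mul_nonpos_right htime (Real.exp_pos _)]

end MinimumPrinciple

/-! ### Time-increasing solutions and their difference quotients -/

section Solutions

lemma continuousAt_uncurry_of_monotoneOn {X : Type*} [TopologicalSpace X] {u : ℝ → X → ℝ}
    {I : Set ℝ} {t : ℝ} {x : X} (hI : I ∈ 𝓝 t) (ht : ContinuousAt (fun s => u s x) t)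
    (hx : ∀ s ∈ I, ContinuousAt (u s) x) (hmono : ∀ᶠ y in 𝓝 x, MonotoneOn (fun s => u s y) I) :
    ContinuousAt (fun z : ℝ × X => u z.1 z.2) (t, x) := by
  refine tendsto_order.2 ⟨fun c hc => ?_, fun c hc => ?_⟩
  · obtain ⟨s, ⟨hcs, hsI⟩, hst⟩ :=
      (((ht.eventually (lt_mem_nhds hc)).and hI).filter_mono nhdsWithin_le_nhds |>.and
        (self_mem_nhdsWithin (s := Iio t))).exists
    have hnear : ∀ᶠ y in 𝓝 x, c < u s y ∧ MonotoneOn (fun s => u s y) I :=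
      ((hx s hsI).eventually (lt_mem_nhds hcs)).and hmono
    filter_upwards [(((lt_mem_nhds hst).and hI).prod_nhds hnear)] with z hz
    exact hz.2.1.trans_le (hz.2.2 hsI hz.1.2 hz.1.1.le)
  · obtain ⟨s, ⟨hcs, hsI⟩, hst⟩ :=
      (((ht.eventually (gt_mem_nhds hc)).and hI).filter_mono nhdsWithin_le_nhds |>.and
        (self_mem_nhdsWithin (s := Ioi t))).exists
    have hnear : ∀ᶠ y in 𝓝 x, u s y < c ∧ MonotoneOn (fun s => u s y) I :=
      ((hx s hsI).eventually (gt_mem_nhds hcs)).and hmono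
    filter_upwards [(((gt_mem_nhds hst).and hI).prod_nhds hnear)] with z hz
    exact (hz.2.2 hz.1.2 hsI hz.1.1.le).trans_lt hz.2.1

/-- Nonnegative classical solutions of `∂ₜu = Δu + V f(u)` on `(0, T) × Ω`, for `Ω` open, that are
nondecreasing in time. -/
structure IsMonotoneSolution (Ω : Set (𝔼 n)) (f : ℝ → ℝ) (V : 𝔼 n → ℝ) (T : ℝ)
    (u : ℝ → 𝔼 n → ℝ) : Prop where
  isOpen : IsOpen Ω
  nonneg : ∀ t ∈ Ioo 0 T, ∀ x ∈ Ω, 0 ≤ u t x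
  differentiableAt : ∀ t ∈ Ioo 0 T, ∀ x ∈ Ω, DifferentiableAt ℝ (fun s => u s x) t
  contDiffAt : ∀ t ∈ Ioo 0 T, ∀ x ∈ Ω, ContDiffAt ℝ 2 (u t) x
  deriv_eq : ∀ t ∈ Ioo 0 T, ∀ x ∈ Ω,
    deriv (fun s => u s x) t = lap (u t) x + V x * f (u t x)
  deriv_nonneg : ∀ t ∈ Ioo 0 T, ∀ x ∈ Ω, 0 ≤ deriv (fun s => u s x) t

/-- The forward difference quotient of `u` in time with step `τ`. It stands in for `∂ₜu`, which
need not be twice differentiable in space. -/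
noncomputable def timeQuot {X : Type*} (u : ℝ → X → ℝ) (τ t : ℝ) (x : X) : ℝ :=
  τ⁻¹ * (u (t + τ) x - u t x)

namespace IsMonotoneSolution

variable {Ω : Set (𝔼 n)} {f : ℝ → ℝ} {V : 𝔼 n → ℝ} {T : ℝ} {u : ℝ → 𝔼 n → ℝ} {τ t : ℝ} {x : 𝔼 n}

lemma monotoneOn (S : IsMonotoneSolution Ω f V T u) (hx : x ∈ Ω) :
    MonotoneOn (fun s => u s x) (Ioo 0 T) := by
  refine monotoneOn_of_deriv_nonneg (convex_Ioo 0 T)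
    (fun t ht => (S.differentiableAt t ht x hx).continuousAt.continuousWithinAt) ?_ ?_ <;>
  rw [interior_Ioo]
  · exact fun t ht => (S.differentiableAt t ht x hx).differentiableWithinAt
  · exact fun t ht => S.deriv_nonneg t ht x hx

lemma continuousOn_uncurry (S : IsMonotoneSolution Ω f V T u) :
    ContinuousOn (fun z : ℝ × 𝔼 n => u z.1 z.2) (Ioo 0 T ×ˢ Ω) := by
  rintro ⟨t, x⟩ ⟨ht, hx⟩
  refine (continuousAt_uncurry_of_monotoneOn (Ioo_mem_nhds ht.1 ht.2)
    (S.differentiableAt t ht x hx).continuousAt (fun s hs => (S.contDiffAt s hs x hx).continuousAt)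
    ?_).continuousWithinAt
  filter_upwards [S.isOpen.mem_nhds hx] with y hy using S.monotoneOn hy

lemma timeQuot_nonneg (S : IsMonotoneSolution Ω f V T u) (hτ : 0 < τ) (ht : 0 < t)
    (htτ : t + τ < T) (hx : x ∈ Ω) : 0 ≤ timeQuot u τ t x :=
  mul_nonneg (inv_nonneg.2 hτ.le)
    (sub_nonneg.2 (S.monotoneOn hx ⟨ht, by linarith⟩ ⟨by linarith, htτ⟩ (by linarith)))

lemma continuousOn_timeQuot (S : IsMonotoneSolution Ω f V T u) {a b : ℝ} (hτ : 0 < τ) (ha : 0 < a)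
    (hb : b + τ < T) :
    ContinuousOn (fun z : ℝ × 𝔼 n => timeQuot u τ z.1 z.2) (Icc a b ×ˢ Ω) := by
  refine continuousOn_const.mul (ContinuousOn.sub ?_ (S.continuousOn_uncurry.mono ?_))
  · refine S.continuousOn_uncurry.comp (f := fun z : ℝ × 𝔼 n => (z.1 + τ, z.2)) (by fun_prop) ?_
    rintro z ⟨hz, hzΩ⟩
    exact ⟨⟨by linarith [hz.1], by linarith [hz.2]⟩, hzΩ⟩
  · rintro z ⟨hz, hzΩ⟩
    exact ⟨⟨by linarith [hz.1], by linarith [hz.2]⟩, hzΩ⟩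

lemma hasDerivAt_timeQuot (S : IsMonotoneSolution Ω f V T u) (hτ : 0 < τ) (ht : 0 < t)
    (htτ : t + τ < T) (hx : x ∈ Ω) :
    HasDerivAt (fun s => timeQuot u τ s x)
      (τ⁻¹ * (deriv (fun s => u s x) (t + τ) - deriv (fun s => u s x) t)) t :=
  (((S.differentiableAt (t + τ) ⟨by linarith, htτ⟩ x hx).hasDerivAt.comp_add_const t τ).sub
    (S.differentiableAt t ⟨ht, by linarith⟩ x hx).hasDerivAt).const_mul τ⁻¹

lemma contDiffAt_timeQuot (S : IsMonotoneSolution Ω f V T u) (hτ : 0 < τ) (ht : 0 < t)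
    (htτ : t + τ < T) (hx : x ∈ Ω) : ContDiffAt ℝ 2 (timeQuot u τ t) x :=
  contDiffAt_const.mul ((S.contDiffAt (t + τ) ⟨by linarith, htτ⟩ x hx).sub
    (S.contDiffAt t ⟨ht, by linarith⟩ x hx))

lemma deriv_timeQuot_sub_lap (S : IsMonotoneSolution Ω f V T u) (hτ : 0 < τ) (ht : 0 < t)
    (htτ : t + τ < T) (hx : x ∈ Ω) :
    deriv (fun s => timeQuot u τ s x) t - lap (timeQuot u τ t) x =
      V x * (τ⁻¹ * (f (u (t + τ) x) - f (u t x))) := by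
  have ht₁ : t ∈ Ioo 0 T := ⟨ht, by linarith⟩
  have ht₂ : t + τ ∈ Ioo 0 T := ⟨by linarith, htτ⟩
  have hlap : lap (timeQuot u τ t) x = τ⁻¹ * (lap (u (t + τ)) x - lap (u t) x) := by
    rw [← lap_sub (S.contDiffAt _ ht₂ x hx) (S.contDiffAt _ ht₁ x hx)]
    exact lap_const_mul _ ((S.contDiffAt _ ht₂ x hx).sub (S.contDiffAt _ ht₁ x hx))
  rw [(S.hasDerivAt_timeQuot hτ ht htτ hx).deriv, hlap, S.deriv_eq _ ht₁ x hx,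
    S.deriv_eq _ ht₂ x hx]
  ring

end IsMonotoneSolution

end Solutions

/-! ### Propagation of positivity of the time increments -/

section Barrier

/-- A function of parabolic type supported in the ball about `y` of squared radius
`r ^ 2 + β * (t - a)`; for large `lam` it is a strict subsolution of `∂ₜw = Δw - C w` inside that
ball, so positivity spreads over it. -/
noncomputable def expandingBump (y : 𝔼 n) (r β lam a t : ℝ) (x : 𝔼 n) : ℝ :=
  Real.exp (-lam * (t - a)) * max (r ^ 2 + β * (t - a) - ‖x - y‖ ^ 2) 0 ^ 2

variable {y x : 𝔼 n} {r β lam C a t : ℝ}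

lemma quadratic_neg_of_discrim {B D s : ℝ} (hB : B ^ 2 < 32 * r ^ 2 * D) :
    -D * s ^ 2 + B * s - 8 * r ^ 2 < 0 := by
  have hD : 0 < D := pos_of_mul_pos_right ((sq_nonneg B).trans_lt hB) (by positivity)
  nlinarith [sq_nonneg (2 * D * s - B)]

lemma expandingBump_eventuallyEq_space (hs : 0 < r ^ 2 + β * (t - a) - ‖x - y‖ ^ 2) :
    expandingBump y r β lam a t =ᶠ[𝓝 x]
      fun z => Real.exp (-lam * (t - a)) * (r ^ 2 + β * (t - a) - ‖z - y‖ ^ 2) ^ 2 := by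
  have hcont : Continuous fun z : 𝔼 n => r ^ 2 + β * (t - a) - ‖z - y‖ ^ 2 := by fun_prop
  filter_upwards [hcont.continuousAt.eventually (lt_mem_nhds hs)] with z hz
  rw [expandingBump, max_eq_left hz.le]

lemma contDiffAt_expandingBump (hs : 0 < r ^ 2 + β * (t - a) - ‖x - y‖ ^ 2) :
    ContDiffAt ℝ 2 (expandingBump y r β lam a t) x := by
  refine ContDiffAt.congr_of_eventuallyEq ?_ (expandingBump_eventuallyEq_space hs)
  exact (contDiff_const.mul ((contDiff_const.sub
    ((contDiff_id.sub contDiff_const).norm_sq ℝ)).pow 2)).contDiffAt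

lemma lap_expandingBump (hs : 0 < r ^ 2 + β * (t - a) - ‖x - y‖ ^ 2) :
    lap (expandingBump y r β lam a t) x = Real.exp (-lam * (t - a)) *
      (8 * ‖x - y‖ ^ 2 - 4 * n * (r ^ 2 + β * (t - a) - ‖x - y‖ ^ 2)) := by
  set ρ := r ^ 2 + β * (t - a)
  have hsq : ContDiffAt ℝ 2 (fun z => ‖z - y‖ ^ 2) x :=
    ((contDiff_id.sub contDiff_const).norm_sq ℝ).contDiffAt
  have hF : ContDiff ℝ 2 fun q : ℝ => (ρ - q) ^ 2 := by fun_prop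
  have hF' : deriv (fun q : ℝ => (ρ - q) ^ 2) = fun q => -2 * (ρ - q) := by
    ext q
    rw [(((hasDerivAt_id' q).const_sub ρ).fun_pow 2).deriv]
    simp
  have hF'' : deriv (fun q : ℝ => -2 * (ρ - q)) (‖x - y‖ ^ 2) = 2 := by
    rw [(((hasDerivAt_id' _).const_sub ρ).const_mul (-2)).deriv]
    norm_num
  have hlap : lap (fun z => (ρ - ‖z - y‖ ^ 2) ^ 2) x =
      8 * ‖x - y‖ ^ 2 - 4 * n * (ρ - ‖x - y‖ ^ 2) := by
    rw [lap_comp (F := fun q => (ρ - q) ^ 2) hF.contDiffAt hsq, hF', hF'', gradient_norm_sub_sq,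
      lap_norm_sub_sq, norm_smul, Real.norm_ofNat]
    ring
  rw [lap_congr (expandingBump_eventuallyEq_space hs),
    lap_const_mul _ ((contDiff_const (c := ρ)).contDiffAt.sub hsq |>.pow 2), hlap]

lemma hasDerivAt_expandingBump (hs : 0 < r ^ 2 + β * (t - a) - ‖x - y‖ ^ 2) :
    HasDerivAt (fun q => expandingBump y r β lam a q x) (Real.exp (-lam * (t - a)) *
      (-lam * (r ^ 2 + β * (t - a) - ‖x - y‖ ^ 2) ^ 2 +
        2 * β * (r ^ 2 + β * (t - a) - ‖x - y‖ ^ 2))) t := by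
  have hbase : HasDerivAt (fun q => r ^ 2 + β * (q - a) - ‖x - y‖ ^ 2) β t := by
    simpa using ((((hasDerivAt_id t).sub_const a).const_mul β).const_add (r ^ 2)).sub_const
      (‖x - y‖ ^ 2)
  have hexp : HasDerivAt (fun q => Real.exp (-lam * (q - a)))
      (Real.exp (-lam * (t - a)) * -lam) t :=
    (((hasDerivAt_id t).sub_const a).const_mul (-lam)).exp.congr_deriv (by simp)
  refine ((hexp.mul (hbase.pow 2)).congr_deriv ?_).congr_of_eventuallyEq ?_
  · simp only [Pi.pow_apply]
    norm_num
    ring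
  · filter_upwards [hbase.continuousAt.eventually (lt_mem_nhds hs)] with q hq
    simp [expandingBump, max_eq_left hq.le]

lemma deriv_expandingBump_sub_lap_lt (hβ : 0 ≤ β) (hat : a ≤ t)
    (hlam : (2 * β + 4 * n + 8) ^ 2 < 32 * r ^ 2 * (lam - C))
    (hs : 0 < r ^ 2 + β * (t - a) - ‖x - y‖ ^ 2) :
    deriv (fun q => expandingBump y r β lam a q x) t - lap (expandingBump y r β lam a t) x <
      -C * expandingBump y r β lam a t x := by
  rw [(hasDerivAt_expandingBump hs).deriv, lap_expandingBump hs, expandingBump,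
    max_eq_left hs.le]
  have hquad := quadratic_neg_of_discrim (s := r ^ 2 + β * (t - a) - ‖x - y‖ ^ 2) hlam
  have hgrow : 0 ≤ β * (t - a) := mul_nonneg hβ (sub_nonneg.2 hat)
  nlinarith [mul_pos (Real.exp_pos (-lam * (t - a)))
    (by linarith : 0 < 8 * (β * (t - a)) -
      (-(lam - C) * (r ^ 2 + β * (t - a) - ‖x - y‖ ^ 2) ^ 2 +
        (2 * β + 4 * n + 8) * (r ^ 2 + β * (t - a) - ‖x - y‖ ^ 2) - 8 * r ^ 2))]

lemma expandingBump_self_le : expandingBump y r β lam a a x ≤ r ^ 4 := by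
  have hmax : max (r ^ 2 - ‖x - y‖ ^ 2) 0 ≤ r ^ 2 :=
    max_le (sub_le_self _ (by positivity)) (by positivity)
  calc expandingBump y r β lam a a x = max (r ^ 2 - ‖x - y‖ ^ 2) 0 ^ 2 := by simp [expandingBump]
    _ ≤ (r ^ 2) ^ 2 := pow_le_pow_left₀ (le_max_right _ _) hmax 2
    _ = r ^ 4 := by ring

lemma pos_of_expandingBump_pos (h : 0 < expandingBump y r β lam a t x) :
    0 < r ^ 2 + β * (t - a) - ‖x - y‖ ^ 2 := by
  by_contra! hle
  simp [expandingBump, max_eq_right hle] at h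

lemma mul_expandingBump_le_of_supersolution {w : ℝ → 𝔼 n → ℝ} {R b c : ℝ} (hr : 0 < r)
    (hR : 0 < R) (hβ : 0 ≤ β) (hβR : r ^ 2 + β * (b - a) ≤ R ^ 2)
    (hlam : (2 * β + 4 * n + 8) ^ 2 < 32 * r ^ 2 * (lam - C)) (hc : 0 < c)
    (hw : ContinuousOn (fun z : ℝ × 𝔼 n => w z.1 z.2) (Icc a b ×ˢ closedBall y R))
    (hw₀ : ∀ t ∈ Icc a b, ∀ x ∈ closedBall y R, 0 ≤ w t x)
    (hinit : ∀ x ∈ closedBall y r, c ≤ w a x)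
    (hsuper : ∀ t ∈ Icc a b, ∀ x ∈ closedBall y R, DifferentiableAt ℝ (fun s => w s x) t ∧
      ContDiffAt ℝ 2 (w t) x ∧ -C * w t x ≤ deriv (fun s => w s x) t - lap (w t) x) :
    ∀ t ∈ Icc a b, ∀ x ∈ closedBall y R, c / r ^ 4 * expandingBump y r β lam a t x ≤ w t x := by
  set ε := c / r ^ 4
  have hε₀ : 0 < ε := by positivity
  suffices ∀ t ∈ Icc a b, ∀ x ∈ closedBall y R, 0 ≤ w t x - ε * expandingBump y r β lam a t x from
    fun t ht x hx => sub_nonneg.1 (this t ht x hx)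
  refine parabolic_minimum_principle (lam := -C) (isCompact_closedBall y R) (hw.sub ?_)
    fun t ht x hx hneg => ?_
  · unfold expandingBump
    fun_prop
  have hs : 0 < r ^ 2 + β * (t - a) - ‖x - y‖ ^ 2 :=
    pos_of_expandingBump_pos (pos_of_mul_pos_right ((hw₀ t ht x hx).trans_lt (sub_neg.1 hneg))
      hε₀.le)
  have hat : a < t := by
    refine ht.1.lt_of_ne fun hat => ?_
    subst hat
    have hxr : x ∈ closedBall y r :=
      mem_closedBall_iff_norm.2 (abs_le_of_sq_le_sq' (by linarith) hr.le).2
    have hle : ε * expandingBump y r β lam a a x ≤ ε * r ^ 4 :=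
      mul_le_mul_of_nonneg_left expandingBump_self_le hε₀.le
    have hεr : ε * r ^ 4 = c := div_mul_cancel₀ _ (by positivity)
    linarith [hinit x hxr]
  have hxR : x ∈ ball y R := by
    have : β * (t - a) ≤ β * (b - a) := by gcongr; exact ht.2
    exact mem_ball_iff_norm.2 (abs_lt_of_sq_lt_sq' (by linarith) hR.le).2
  obtain ⟨hdiff, hcd, hineq⟩ := hsuper t ht x hx
  have hbump := hasDerivAt_expandingBump (lam := lam) hs
  have hbumpcd := contDiffAt_expandingBump (lam := lam) hs
  refine ⟨hat, ball_subset_interior_closedBall hxR,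
    hdiff.sub (hbump.differentiableAt.const_mul ε), hcd.sub (contDiffAt_const.mul hbumpcd), ?_⟩
  rw [deriv_fun_sub hdiff (hbump.differentiableAt.const_mul ε),
    lap_sub hcd (contDiffAt_const.mul hbumpcd), lap_const_mul _ hbumpcd, deriv_const_mul_field]
  nlinarith [mul_lt_mul_of_pos_left (deriv_expandingBump_sub_lap_lt hβ hat.le hlam hs) hε₀]

end Barrier

section Propagation

lemma exists_isOpen_eventually_le {X ι : Type*} [TopologicalSpace X] [BaireSpace X] {l : Filter ι}
    [l.IsCountablyGenerated] {F : ι → X → ℝ} {U : Set X} {c : ℝ} (hU : IsOpen U)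
    (hne : U.Nonempty) (hF : ∀ᶠ i in l, ContinuousOn (F i) U)
    (hc : ∀ x ∈ U, ∀ᶠ i in l, c ≤ F i x) :
    ∃ W ⊆ U, IsOpen W ∧ W.Nonempty ∧ ∀ᶠ i in l, ∀ x ∈ W, c ≤ F i x := by
  obtain ⟨s, hs⟩ := l.exists_antitone_basis
  set A : ℕ → Set X := fun N => {x | ∀ i ∈ s N, ContinuousOn (F i) U → x ∈ U → c ≤ F i x}
  have hA : ∀ N, IsClosed (A N) := by
    intro N
    have hcompl : (A N)ᶜ = ⋃ i ∈ s N, ⋃ _ : ContinuousOn (F i) U, U ∩ F i ⁻¹' Iio c := by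
      ext x
      simp only [A, mem_compl_iff, mem_ofPred_eq, not_forall, not_le, mem_iUnion, mem_inter_iff,
        mem_preimage, mem_Iio, exists_prop]
    rw [← isOpen_compl_iff, hcompl]
    exact isOpen_biUnion fun i _ => isOpen_iUnion fun hi => hi.isOpen_inter_preimage hU isOpen_Iio
  have hcover : ⋃ N, A N = univ := by
    refine eq_univ_of_forall fun x => mem_iUnion.2 ?_
    by_cases hx : x ∈ U
    · obtain ⟨N, -, hN⟩ := hs.1.mem_iff.1 (hc x hx)
      exact ⟨N, fun i hi _ _ => hN hi⟩
    · exact ⟨0, fun i _ _ hxU => absurd hxU hx⟩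
  obtain ⟨x, hxU, hx⟩ :=
    (dense_iUnion_interior_of_closed hA hcover).inter_open_nonempty U hU hne
  obtain ⟨N, hN⟩ := mem_iUnion.1 hx
  refine ⟨U ∩ interior (A N), inter_subset_left, hU.inter isOpen_interior, ⟨x, hxU, hN⟩, ?_⟩
  filter_upwards [hs.1.mem_of_mem (i := N) trivial, hF] with i hi hFi y hy
  exact interior_subset hy.2 i hi hFi hy.1

/-- The forward time difference quotients of `u` with small steps are bounded below by a positive
constant on `A`, uniformly in the times from `a` up to `T`. -/
def IsUniformlyIncreasingOn {X : Type*} (u : ℝ → X → ℝ) (T a : ℝ) (A : Set X) : Prop :=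
  ∃ c > 0, ∀ᶠ τ in 𝓝[>] (0 : ℝ), ∀ t ≥ a, t + τ < T → ∀ x ∈ A, c ≤ timeQuot u τ t x

namespace IsUniformlyIncreasingOn

variable {X : Type*} {u : ℝ → X → ℝ} {T a : ℝ} {A B : Set X}

lemma mono (h : IsUniformlyIncreasingOn u T a A) (hBA : B ⊆ A) :
    IsUniformlyIncreasingOn u T a B := by
  obtain ⟨c, hc, h⟩ := h
  exact ⟨c, hc, h.mono fun τ hτ t ht htτ x hx => hτ t ht htτ x (hBA hx)⟩

lemma empty : IsUniformlyIncreasingOn u T a ∅ :=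
  ⟨1, one_pos, Eventually.of_forall fun _ _ _ _ _ hx => hx.elim⟩

lemma union (hA : IsUniformlyIncreasingOn u T a A) (hB : IsUniformlyIncreasingOn u T a B) :
    IsUniformlyIncreasingOn u T a (A ∪ B) := by
  obtain ⟨c, hc, hA⟩ := hA
  obtain ⟨d, hd, hB⟩ := hB
  refine ⟨min c d, lt_min hc hd, ?_⟩
  filter_upwards [hA, hB] with τ hτA hτB t ht htτ x hx
  rcases hx with hx | hx
  · exact (min_le_left _ _).trans (hτA t ht htτ x hx)
  · exact (min_le_right _ _).trans (hτB t ht htτ x hx)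

end IsUniformlyIncreasingOn

namespace IsMonotoneSolution

variable {Ω : Set (𝔼 n)} {f : ℝ → ℝ} {V : 𝔼 n → ℝ} {T : ℝ} {u : ℝ → 𝔼 n → ℝ} {C : ℝ}

lemma neg_mul_timeQuot_le (S : IsMonotoneSolution Ω f V T u) {Cf Vm : ℝ} (hCf : 0 ≤ Cf)
    (hf : ∀ a b, 0 ≤ a → a ≤ b → -Cf * (b - a) ≤ f b - f a) (hV₀ : ∀ x ∈ Ω, 0 ≤ V x)
    (hVm : ∀ x ∈ Ω, V x ≤ Vm) {τ t : ℝ} {x : 𝔼 n} (hτ : 0 < τ) (ht : 0 < t) (htτ : t + τ < T)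
    (hx : x ∈ Ω) : -(Vm * Cf) * timeQuot u τ t x ≤
      deriv (fun s => timeQuot u τ s x) t - lap (timeQuot u τ t) x := by
  have hmono : u t x ≤ u (t + τ) x :=
    S.monotoneOn hx ⟨ht, by linarith⟩ ⟨by linarith, htτ⟩ (by linarith)
  have hq := S.timeQuot_nonneg hτ ht htτ hx
  calc -(Vm * Cf) * timeQuot u τ t x ≤ -(V x * Cf) * timeQuot u τ t x :=
        mul_le_mul_of_nonneg_right
          (neg_le_neg (mul_le_mul_of_nonneg_right (hVm x hx) hCf)) hq
    _ = V x * (τ⁻¹ * (-Cf * (u (t + τ) x - u t x))) := by rw [timeQuot]; ring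
    _ ≤ V x * (τ⁻¹ * (f (u (t + τ) x) - f (u t x))) :=
        mul_le_mul_of_nonneg_left (mul_le_mul_of_nonneg_left
          (hf _ _ (S.nonneg t ⟨ht, by linarith⟩ x hx) hmono) (inv_nonneg.2 hτ.le)) (hV₀ x hx)
    _ = _ := (S.deriv_timeQuot_sub_lap hτ ht htτ hx).symm

lemma isUniformlyIncreasingOn_closedBall (S : IsMonotoneSolution Ω f V T u) (hC : 0 ≤ C)
    (hsuper : ∀ τ > 0, ∀ t > 0, t + τ < T → ∀ x ∈ Ω, -C * timeQuot u τ t x ≤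
      deriv (fun s => timeQuot u τ s x) t - lap (timeQuot u τ t) x)
    {y : 𝔼 n} {r R R' a c b : ℝ} (hr : 0 < r) (hrR : r ≤ R) (hR : closedBall y R ⊆ Ω)
    (ha : 0 < a) (hc : 0 < c)
    (hinit : ∀ᶠ τ in 𝓝[>] (0 : ℝ), a + τ < T → ∀ x ∈ closedBall y r, c ≤ timeQuot u τ a x)
    (hR'₀ : 0 < R') (hR' : R' < R) (hab : a < b) :
    IsUniformlyIncreasingOn u T b (closedBall y R') := by
  have hRr : 0 ≤ R ^ 2 - r ^ 2 := sub_nonneg.2 (pow_le_pow_left₀ hr.le hrR 2)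
  have hRR' : 0 < R ^ 2 - R' ^ 2 := sub_pos.2 (pow_lt_pow_left₀ hR' hR'₀.le two_ne_zero)
  set β₀ := (R ^ 2 - r ^ 2) / (b - a)
  have hB₀ : 0 < 2 * β₀ + 4 * n + 8 := by
    linarith [div_nonneg hRr (sub_nonneg.2 hab.le), (n.cast_nonneg : (0 : ℝ) ≤ n)]
  set lam := C + (2 * β₀ + 4 * n + 8) ^ 2 / (16 * r ^ 2) with hlam
  have hlam₀ : 0 ≤ lam := by positivity
  refine ⟨c / r ^ 4 * (Real.exp (-lam * T) * (R ^ 2 - R' ^ 2) ^ 2), by positivity, ?_⟩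
  filter_upwards [hinit, self_mem_nhdsWithin] with τ hcτ hτ t hbt htτ x hx
  replace hτ : 0 < τ := hτ
  have hta : 0 < t - a := by linarith
  -- the speed is tuned so that the support of the bump fills the ball of radius `R` at time `t`
  set β := (R ^ 2 - r ^ 2) / (t - a)
  have hβ : 0 ≤ β := div_nonneg hRr hta.le
  have hβt : r ^ 2 + β * (t - a) = R ^ 2 := by
    rw [div_mul_cancel₀ _ hta.ne', add_sub_cancel]
  have hlam' : (2 * β + 4 * n + 8) ^ 2 < 32 * r ^ 2 * (lam - C) := by
    have hββ₀ : β ≤ β₀ := div_le_div_of_nonneg_left hRr (by linarith) (by linarith)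
    calc (2 * β + 4 * n + 8) ^ 2 ≤ (2 * β₀ + 4 * n + 8) ^ 2 := by gcongr
      _ < 2 * (2 * β₀ + 4 * n + 8) ^ 2 := lt_two_mul_self (pow_pos hB₀ 2)
      _ = 32 * r ^ 2 * (lam - C) := by rw [hlam]; field_simp; ring
  have hbump : (Real.exp (-lam * T) * (R ^ 2 - R' ^ 2) ^ 2) ≤ expandingBump y r β lam a t x := by
    have hxy : ‖x - y‖ ^ 2 ≤ R' ^ 2 :=
      pow_le_pow_left₀ (norm_nonneg _) (mem_closedBall_iff_norm.1 hx) 2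
    have hexp : -lam * T ≤ -lam * (t - a) :=
      mul_le_mul_of_nonpos_left (by linarith) (neg_nonpos.2 hlam₀)
    rw [expandingBump, hβt, max_eq_left (by linarith)]
    gcongr
  refine (mul_le_mul_of_nonneg_left hbump (by positivity)).trans ?_
  refine mul_expandingBump_le_of_supersolution hr (hr.trans_le hrR) hβ hβt.le hlam' hc
    ((S.continuousOn_timeQuot hτ ha htτ).mono (prod_mono_right hR))
    (fun s hs z hz => S.timeQuot_nonneg hτ (by linarith [hs.1]) (by linarith [hs.2]) (hR hz))
    (hcτ (by linarith)) (fun s hs z hz => ?_) t ⟨by linarith, le_rfl⟩ x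
    (closedBall_subset_closedBall hR'.le hx)
  have hs₀ : 0 < s := by linarith [hs.1]
  have hsτ : s + τ < T := by linarith [hs.2]
  exact ⟨(S.hasDerivAt_timeQuot hτ hs₀ hsτ (hR hz)).differentiableAt,
    S.contDiffAt_timeQuot hτ hs₀ hsτ (hR hz), hsuper τ hτ s hs₀ hsτ z (hR hz)⟩

lemma isUniformlyIncreasingOn_of_isCompact (S : IsMonotoneSolution Ω f V T u)
    (hconn : IsPreconnected Ω) (hC : 0 ≤ C)
    (hsuper : ∀ τ > 0, ∀ t > 0, t + τ < T → ∀ x ∈ Ω, -C * timeQuot u τ t x ≤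
      deriv (fun s => timeQuot u τ s x) t - lap (timeQuot u τ t) x)
    {W K : Set (𝔼 n)} {a c b : ℝ} (hW : IsOpen W) (hWΩ : W ⊆ Ω) (hWne : W.Nonempty) (ha : 0 < a)
    (hc : 0 < c) (hinit : ∀ᶠ τ in 𝓝[>] (0 : ℝ), ∀ x ∈ W, c ≤ timeQuot u τ a x) (hab : a < b)
    (hK : IsCompact K) (hKΩ : K ⊆ Ω) : IsUniformlyIncreasingOn u T b K := by
  set G : Set (𝔼 n) := {y | ∃ r > 0, ∀ b > a, IsUniformlyIncreasingOn u T b (ball y r)}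
  have hGopen : IsOpen G := by
    refine Metric.isOpen_iff.2 fun y ⟨r, hr, h⟩ => ⟨r / 2, by positivity, fun z hz =>
      ⟨r / 2, by positivity, fun b hb => (h b hb).mono (ball_subset_ball' ?_)⟩⟩
    linarith [mem_ball.1 hz]
  have hGne : (Ω ∩ G).Nonempty := by
    obtain ⟨y, hy⟩ := hWne
    obtain ⟨r, hr, hrW⟩ := Metric.nhds_basis_closedBall.mem_iff.1 (hW.mem_nhds hy)
    refine ⟨y, hWΩ hy, r / 2, by positivity, fun b hb => ?_⟩
    exact (S.isUniformlyIncreasingOn_closedBall hC hsuper hr le_rfl (hrW.trans hWΩ) ha hc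
      (hinit.mono fun τ hτ _ x hx => hτ x (hrW hx)) (half_pos hr) (half_lt_self hr) hb).mono
      ball_subset_closedBall
  have hΩG : Ω ⊆ G := by
    refine hconn.subset_of_closure_inter_subset hGopen hGne fun z ⟨hzG, hzΩ⟩ => ?_
    obtain ⟨ρ, hρ, hρΩ⟩ := Metric.isOpen_iff.1 S.isOpen z hzΩ
    obtain ⟨w, ⟨r, hr, hw⟩, hzw⟩ := Metric.mem_closure_iff.1 hzG (ρ / 4) (by positivity)
    refine ⟨ρ / 8, by positivity, fun b hb => ?_⟩
    obtain ⟨c', hc', hmid⟩ := hw ((a + b) / 2) (by linarith)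
    have hwΩ : closedBall w (ρ / 2) ⊆ Ω :=
      (closedBall_subset_ball' (by linarith [dist_comm w z])).trans hρΩ
    have hballs : closedBall w (min (r / 2) (ρ / 2)) ⊆ ball w r :=
      closedBall_subset_ball ((min_le_left _ _).trans_lt (half_lt_self hr))
    refine (S.isUniformlyIncreasingOn_closedBall hC hsuper (by positivity) (min_le_right _ _) hwΩ
      (by linarith) hc' (hmid.mono fun τ hτ hτT x hx => hτ _ le_rfl hτT x (hballs hx))
      (by positivity : 0 < 3 * ρ / 8) (by linarith) (by linarith : (a + b) / 2 < b)).mono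
      ((ball_subset_ball' ?_).trans ball_subset_closedBall)
    linarith
  refine hK.induction_on (p := IsUniformlyIncreasingOn u T b) .empty (fun s t hst ht => ht.mono hst)
    (fun s t hs ht => hs.union ht) fun x hx => ?_
  obtain ⟨r, hr, h⟩ := hΩG (hKΩ hx)
  exact ⟨ball x r, mem_nhdsWithin_of_mem_nhds (ball_mem_nhds x hr), h b hab⟩

lemma continuousOn_deriv (S : IsMonotoneSolution Ω f V T u) (hf : ContinuousOn f (Ici 0))
    (hV : ContinuousOn V Ω) {t : ℝ} (ht : t ∈ Ioo 0 T) :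
    ContinuousOn (fun x => deriv (fun s => u s x) t) Ω := by
  have hrhs : ContinuousOn (fun x => lap (u t) x + V x * f (u t x)) Ω := by
    refine ContinuousOn.add ?_ (hV.mul (hf.comp ?_ (S.nonneg t ht))) <;> intro x hx
    · exact (continuousAt_lap (S.contDiffAt t ht x hx)).continuousWithinAt
    · exact (S.contDiffAt t ht x hx).continuousAt.continuousWithinAt
  exact hrhs.congr (S.deriv_eq t ht)

lemma exists_isOpen_le_timeQuot (S : IsMonotoneSolution Ω f V T u) (hf : ContinuousOn f (Ici 0))
    (hV : ContinuousOn V Ω) {t : ℝ} {x : 𝔼 n} (ht : t ∈ Ioo 0 T) (hx : x ∈ Ω)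
    (hpos : 0 < deriv (fun s => u s x) t) :
    ∃ W ⊆ Ω, IsOpen W ∧ W.Nonempty ∧
      ∃ c > 0, ∀ᶠ τ in 𝓝[>] (0 : ℝ), ∀ y ∈ W, c ≤ timeQuot u τ t y := by
  obtain ⟨c, hc, hcx⟩ := exists_between hpos
  set U := Ω ∩ (fun y => deriv (fun s => u s y) t) ⁻¹' Ioi c
  have hU : IsOpen U := (S.continuousOn_deriv hf hV ht).isOpen_inter_preimage S.isOpen isOpen_Ioi
  have hcont : ∀ᶠ τ in 𝓝[>] (0 : ℝ), ContinuousOn (timeQuot u τ t) U := by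
    filter_upwards [Ioo_mem_nhdsGT (sub_pos.2 ht.2)] with τ hτ y hy
    exact (S.contDiffAt_timeQuot hτ.1 ht.1 (by linarith [hτ.2])
      hy.1).continuousAt.continuousWithinAt
  have hlim : ∀ y ∈ U, ∀ᶠ τ in 𝓝[>] (0 : ℝ), c ≤ timeQuot u τ t y := fun y hy =>
    ((S.differentiableAt t ht y hy.1).hasDerivAt.tendsto_slope_zero_right.eventually
      (lt_mem_nhds hy.2)).mono fun τ hτ => hτ.le
  obtain ⟨W, hWU, hW, hWne, hcW⟩ := exists_isOpen_eventually_le hU ⟨x, hx, hcx⟩ hcont hlim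
  exact ⟨W, hWU.trans inter_subset_left, hW, hWne, c, hc, hcW⟩

end IsMonotoneSolution

end Propagation

/-! ### Convex nonlinearities of power growth -/

section Nonlinearity

variable {f : ℝ → ℝ} {p q ℓ : ℝ}

lemma exists_neg_mul_sub_le_of_convexOn (hconv : ConvexOn ℝ (Ici 0) f)
    (hf : DifferentiableWithinAt ℝ f (Ici 0) 0) :
    ∃ C ≥ 0, ∀ a b, 0 ≤ a → a ≤ b → -C * (b - a) ≤ f b - f a := by
  set D := derivWithin f (Ici 0) 0
  refine ⟨|D|, abs_nonneg D, fun a b ha hab => ?_⟩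
  rcases hab.eq_or_lt with rfl | hab
  · simp
  have hD : D ≤ slope f a b := by
    have hb₀ : 0 < b := ha.trans_lt hab
    have h₀b : D ≤ slope f b 0 := by
      rw [slope_comm]
      exact hconv.derivWithin_le_slope self_mem_Ici hb₀.le hb₀ hf
    rw [slope_comm]
    exact h₀b.trans (hconv.slope_mono hb₀.le ⟨self_mem_Ici, hb₀.ne⟩ ⟨ha, hab.ne⟩ ha)
  rw [slope_def_field, le_div_iff₀ (sub_pos.2 hab)] at hD
  exact (mul_le_mul_of_nonneg_right (neg_abs_le D) (sub_nonneg.2 hab.le)).trans hD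

lemma deriv_mul_sub_le_of_convexOn (hconv : ConvexOn ℝ (Ici 0) f) {a b : ℝ} (ha : 0 ≤ a)
    (hab : a ≤ b) (hf : DifferentiableAt ℝ f a) : deriv f a * (b - a) ≤ f b - f a := by
  rcases hab.eq_or_lt with rfl | hab
  · simp
  rw [← le_div_iff₀ (sub_pos.2 hab), ← slope_def_field]
  exact hconv.deriv_le_slope ha (ha.trans hab.le) hab hf

lemma monotoneOn_deriv_of_convexOn (hconv : ConvexOn ℝ (Ici 0) f)
    (hf : ∀ s > 0, DifferentiableAt ℝ f s) : MonotoneOn (deriv f) (Ioi 0) :=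
  (hconv.subset Ioi_subset_Ici_self (convex_Ioi 0)).monotoneOn_deriv hf

lemma deriv_deriv_nonneg_of_convexOn (hconv : ConvexOn ℝ (Ici 0) f)
    (hf : ∀ s > 0, DifferentiableAt ℝ f s) {s : ℝ} (hs : 0 < s) : 0 ≤ deriv (deriv f) s := by
  rw [← derivWithin_of_isOpen isOpen_Ioi hs]
  exact (monotoneOn_deriv_of_convexOn hconv hf).derivWithin_nonneg

lemma tendsto_rpow_mul_slope_mul_self (hlim : Tendsto (fun s => s ^ (-p) * f s) atTop (𝓝 ℓ))
    {θ : ℝ} (hθ : 0 < θ) :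
    Tendsto (fun s => s ^ (1 - p) * slope f s (θ * s)) atTop
      (𝓝 (ℓ * slope (fun r => r ^ p) 1 θ)) := by
  have hscaled : Tendsto (fun s => θ ^ p * ((θ * s) ^ (-p) * f (θ * s))) atTop (𝓝 (θ ^ p * ℓ)) :=
    (hlim.comp (tendsto_id.const_mul_atTop hθ)).const_mul _
  have hlimit : ℓ * slope (fun r : ℝ => r ^ p) 1 θ = (θ ^ p * ℓ - ℓ) / (θ - 1) := by
    rw [slope_def_field, Real.one_rpow]; ring
  rw [hlimit]
  refine ((hscaled.sub hlim).div_const (θ - 1)).congr' ?_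
  filter_upwards [eventually_gt_atTop 0] with s hs
  have hden : θ * s - s = (θ - 1) * s := by ring
  rw [Real.mul_rpow hθ.le hs.le, slope_def_field, hden, sub_eq_add_neg 1 p, Real.rpow_add hs,
    Real.rpow_one, Real.rpow_neg hθ.le]
  have := (Real.rpow_pos_of_pos hθ p).ne'
  rcases eq_or_ne θ 1 with rfl | hθ₁
  · simp
  have := sub_ne_zero.2 hθ₁
  field_simp

lemma tendsto_rpow_mul_deriv_of_convexOn (hconv : ConvexOn ℝ (Ici 0) f)
    (hf : ∀ s > 0, DifferentiableAt ℝ f s)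
    (hlim : Tendsto (fun s => s ^ (-p) * f s) atTop (𝓝 ℓ)) :
    Tendsto (fun s => s ^ (1 - p) * deriv f s) atTop (𝓝 (p * ℓ)) := by
  have hslope : Tendsto (fun θ => ℓ * slope (fun r : ℝ => r ^ p) 1 θ) (𝓝[≠] 1) (𝓝 (p * ℓ)) := by
    have h := (Real.hasDerivAt_rpow_const (x := 1) (p := p) (.inl one_ne_zero)).tendsto_slope
    rw [Real.one_rpow, mul_one] at h
    rw [mul_comm p]
    exact h.const_mul ℓ
  refine tendsto_order.2 ⟨fun c hc => ?_, fun c hc => ?_⟩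
  · obtain ⟨θ, hcθ, hθ₀, hθ₁⟩ : ∃ θ : ℝ, c < ℓ * slope (fun r => r ^ p) 1 θ ∧ 0 < θ ∧ θ < 1 :=
      (((hslope.mono_left (nhdsLT_le_nhdsNE 1)).eventually (lt_mem_nhds hc)).and
        (Ioo_mem_nhdsLT one_pos)).exists
    filter_upwards [(tendsto_rpow_mul_slope_mul_self hlim hθ₀).eventually (lt_mem_nhds hcθ),
      eventually_gt_atTop 0] with s hcs hs
    refine hcs.trans_le (mul_le_mul_of_nonneg_left ?_ (Real.rpow_nonneg hs.le _))
    rw [slope_comm]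
    exact hconv.slope_le_deriv (mul_pos hθ₀ hs).le hs.le (mul_lt_of_lt_one_left hs hθ₁) (hf s hs)
  · obtain ⟨θ, hcθ, hθ₁⟩ : ∃ θ : ℝ, ℓ * slope (fun r => r ^ p) 1 θ < c ∧ 1 < θ :=
      (((hslope.mono_left (nhdsGT_le_nhdsNE 1)).eventually (gt_mem_nhds hc)).and
        self_mem_nhdsWithin).exists
    have hθ₀ : 0 < θ := one_pos.trans hθ₁
    filter_upwards [(tendsto_rpow_mul_slope_mul_self hlim hθ₀).eventually (gt_mem_nhds hcθ),
      eventually_gt_atTop 0] with s hcs hs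
    refine (mul_le_mul_of_nonneg_left ?_ (Real.rpow_nonneg hs.le _)).trans_lt hcs
    exact hconv.deriv_le_slope hs.le (mul_pos hθ₀ hs).le (lt_mul_of_one_lt_left hs hθ₁) (hf s hs)

/-- The profile `F(s) = f(s) + s ^ q` of the comparison function `∂ₜu - δ φᵐ F(u)`. For `1 < q < p`
the power `s ^ q` makes `F` strictly convex and `f'F - F'f` large. -/
noncomputable def profile (f : ℝ → ℝ) (q s : ℝ) : ℝ :=
  f s + s ^ q

lemma deriv_profile {s : ℝ} (hf : DifferentiableAt ℝ f s) (hs : 0 < s) :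
    deriv (profile f q) s = deriv f s + q * s ^ (q - 1) :=
  (hf.hasDerivAt.add (Real.hasDerivAt_rpow_const (.inl hs.ne'))).deriv

lemma deriv_deriv_profile (hf : ∀ s > 0, DifferentiableAt ℝ f s) {s : ℝ}
    (hf' : DifferentiableAt ℝ (deriv f) s) (hs : 0 < s) :
    deriv (deriv (profile f q)) s = deriv (deriv f) s + q * (q - 1) * s ^ (q - 2) := by
  have heq : deriv (profile f q) =ᶠ[𝓝 s] fun r => deriv f r + q * r ^ (q - 1) := by
    filter_upwards [lt_mem_nhds hs] with r hr using deriv_profile (hf r hr) hr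
  have hpow := (Real.hasDerivAt_rpow_const (p := q - 1) (.inl hs.ne')).const_mul q
  rw [heq.deriv_eq, (hf'.hasDerivAt.fun_add hpow).deriv, sub_sub, one_add_one_eq_two, mul_assoc]

lemma contDiffAt_profile {s : ℝ} (hf : ContDiffAt ℝ 2 f s) (hs : 0 < s) :
    ContDiffAt ℝ 2 (profile f q) s :=
  hf.add (Real.contDiffAt_rpow_const (n := 2) (.inl hs.ne'))

lemma continuousOn_profile (hf : ContinuousOn f (Ici 0)) (hq : 0 ≤ q) :
    ContinuousOn (profile f q) (Ici 0) :=
  hf.add (Real.continuous_rpow_const hq).continuousOn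

end Nonlinearity

section Threshold

variable {f : ℝ → ℝ} {κ : ℝ}

/-- The growth of the profile `F(s) = f(s) + s ^ (1 + 3κ)` at a large value `s` of the solution when
`f(s) ∼ s ^ (1 + 4κ)`. All powers are written in terms of `s` and `s ^ κ`. -/
structure HasProfileBounds (f : ℝ → ℝ) (κ s : ℝ) : Prop where
  one_le : 1 ≤ s
  nonneg : 0 ≤ profile f (1 + 3 * κ) s
  le : profile f (1 + 3 * κ) s ≤ 3 * (s * (s ^ κ) ^ 4)
  abs_deriv_le : |deriv (profile f (1 + 3 * κ)) s| ≤ 3 * (1 + 4 * κ) * (s ^ κ) ^ 4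
  le_deriv_deriv : 3 * κ * (1 + 3 * κ) * (s ^ κ) ^ 3 / s ≤ deriv (deriv (profile f (1 + 3 * κ))) s
  le_wronskian : κ / 2 * (s * (s ^ κ) ^ 7) ≤
    deriv f s * profile f (1 + 3 * κ) s - deriv (profile f (1 + 3 * κ)) s * f s

lemma rpow_one_add_natCast_mul {s : ℝ} (hs : 0 < s) (κ : ℝ) (j : ℕ) :
    s ^ (1 + j * κ) = s * (s ^ κ) ^ j := by
  rw [Real.rpow_add hs, Real.rpow_one, mul_comm (j : ℝ), Real.rpow_mul_natCast hs.le]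

lemma hasProfileBounds_of_mem_Icc (hκ : 0 < κ) (hf : ∀ s > 0, ContDiffAt ℝ 2 f s)
    (hconv : ConvexOn ℝ (Ici 0) f) {s X Y : ℝ} (hs : 1 ≤ s) (hfX : f s = s * (s ^ κ) ^ 4 * X)
    (hfY : deriv f s = (s ^ κ) ^ 4 * Y) (hX : X ∈ Icc 0 2) (hY : Y ∈ Icc 0 (2 * (1 + 4 * κ)))
    (hXY : κ / 2 ≤ Y - (1 + 3 * κ) * X) : HasProfileBounds f κ s := by
  have hdiff : ∀ s > 0, DifferentiableAt ℝ f s := fun s hs => (hf s hs).differentiableAt two_ne_zero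
  have hs₀ : 0 < s := one_pos.trans_le hs
  have hb : 1 ≤ s ^ κ := Real.one_le_rpow hs hκ.le
  have hpow : s ^ (1 + 3 * κ) = s * (s ^ κ) ^ 3 := rpow_one_add_natCast_mul hs₀ κ 3
  have hpow' : s ^ (1 + 3 * κ - 1) = (s ^ κ) ^ 3 := by
    rw [Real.rpow_sub_one hs₀.ne', hpow, mul_div_cancel_left₀ _ hs₀.ne']
  have hpow'' : s ^ (1 + 3 * κ - 2) = (s ^ κ) ^ 3 / s := by
    rw [← hpow', ← Real.rpow_sub_one hs₀.ne']; ring_nf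
  set b := s ^ κ
  have hF : profile f (1 + 3 * κ) s = s * b ^ 4 * X + s * b ^ 3 := by rw [profile, hfX, hpow]
  have hF' : deriv (profile f (1 + 3 * κ)) s = b ^ 4 * Y + (1 + 3 * κ) * b ^ 3 := by
    rw [deriv_profile (hdiff s hs₀) hs₀, hfY, hpow']
  have hb34 : b ^ 3 ≤ b ^ 4 := pow_le_pow_right₀ hb (by norm_num)
  have hX₀ := hX.1
  have hY₀ := hY.1
  refine ⟨hs, ?_, ?_, ?_, ?_, ?_⟩
  · rw [hF]; positivity
  · calc profile f (1 + 3 * κ) s ≤ s * b ^ 4 * 2 + s * b ^ 4 := by rw [hF]; gcongr; exact hX.2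
      _ = 3 * (s * b ^ 4) := by ring
  · rw [hF', abs_of_nonneg (by positivity)]
    calc b ^ 4 * Y + (1 + 3 * κ) * b ^ 3 ≤ b ^ 4 * (2 * (1 + 4 * κ)) + (1 + 4 * κ) * b ^ 4 := by
          gcongr
          · exact hY.2
          · norm_num
      _ = 3 * (1 + 4 * κ) * b ^ 4 := by ring
  · have hf' : DifferentiableAt ℝ (deriv f) s :=
      ((hf s hs₀).derivWithin (m := 1) (by norm_num)).differentiableAt one_ne_zero
    rw [deriv_deriv_profile hdiff hf' hs₀, hpow'']
    have := deriv_deriv_nonneg_of_convexOn hconv hdiff hs₀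
    have : 3 * κ * (1 + 3 * κ) * b ^ 3 / s = (1 + 3 * κ) * (1 + 3 * κ - 1) * (b ^ 3 / s) := by ring
    linarith
  · calc κ / 2 * (s * b ^ 7) ≤ (Y - (1 + 3 * κ) * X) * (s * b ^ 7) := by gcongr
      _ = _ := by rw [hF, hF', hfX, hfY]; ring

lemma eventually_hasProfileBounds (hκ : 0 < κ) (hf : ∀ s > 0, ContDiffAt ℝ 2 f s)
    (hconv : ConvexOn ℝ (Ici 0) f)
    (hlim : Tendsto (fun s => s ^ (-(1 + 4 * κ)) * f s) atTop (𝓝 1)) :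
    ∀ᶠ s in atTop, HasProfileBounds f κ s := by
  have hlim' := tendsto_rpow_mul_deriv_of_convexOn hconv
    (fun s hs => (hf s hs).differentiableAt two_ne_zero) hlim
  filter_upwards [eventually_ge_atTop 1, hlim.eventually (Icc_mem_nhds one_pos one_lt_two),
    hlim'.eventually (Icc_mem_nhds (by linarith : 0 < (1 + 4 * κ) * 1)
      (by linarith : (1 + 4 * κ) * 1 < 2 * (1 + 4 * κ))),
    (hlim'.sub (hlim.const_mul (1 + 3 * κ))).eventually (le_mem_nhds (by linarith :
      κ / 2 < (1 + 4 * κ) * 1 - (1 + 3 * κ) * 1))] with s hs hX hY hXY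
  have hs₀ : 0 < s := one_pos.trans_le hs
  have hpow : s ^ (1 + 4 * κ) = s * (s ^ κ) ^ 4 := rpow_one_add_natCast_mul hs₀ κ 4
  have : 0 < s ^ κ := Real.rpow_pos_of_pos hs₀ κ
  refine hasProfileBounds_of_mem_Icc hκ hf hconv hs ?_ ?_ hX hY hXY
  · rw [Real.rpow_neg hs₀.le, hpow]; field_simp
  · rw [Real.rpow_sub hs₀, hpow, Real.rpow_one]; field_simp

lemma mul_one_add_two_mul_le {A L b c e φ Y : ℝ} (hA : 0 ≤ A) (hb : 1 ≤ b) (hc : 0 ≤ c)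
    (he : 0 ≤ e) (hφ : L ≤ φ * b) (hLc : 2 * A ≤ L * c) (hLe : 2 * A ≤ L * e) :
    A * b * (1 + 2 * Y) ≤ φ * (c * b ^ 4 + e * Y ^ 2) := by
  have hb₀ : 0 < b := one_pos.trans_le hb
  have hb24 : b ^ 2 ≤ b ^ 4 := pow_le_pow_right₀ hb (by norm_num)
  have hY : 2 * b ^ 2 * Y ≤ b ^ 4 + Y ^ 2 := by linarith [sq_nonneg (b ^ 2 - Y)]
  refine le_of_mul_le_mul_right ?_ hb₀
  calc A * b * (1 + 2 * Y) * b = A * (b ^ 2 + 2 * b ^ 2 * Y) := by ring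
    _ ≤ A * (b ^ 4 + (b ^ 4 + Y ^ 2)) := by gcongr
    _ ≤ 2 * A * b ^ 4 + 2 * A * Y ^ 2 := by linarith [mul_nonneg hA (sq_nonneg Y)]
    _ ≤ L * c * b ^ 4 + L * e * Y ^ 2 := by gcongr
    _ = L * (c * b ^ 4 + e * Y ^ 2) := by ring
    _ ≤ φ * b * (c * b ^ 4 + e * Y ^ 2) := by gcongr
    _ = φ * (c * b ^ 4 + e * Y ^ 2) * b := by ring

namespace HasProfileBounds

variable {s : ℝ}

lemma drift_nonneg (h : HasProfileBounds f κ s) (hκ : 0 < κ) {A L v₀ v φ La In N : ℝ} {k : ℕ}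
    (hA : 0 ≤ A) (hv₀ : 0 ≤ v₀) (hv : v₀ ≤ v) (hφ : 0 ≤ φ) (hφs : L ≤ φ * s ^ κ)
    (hLc : 2 * (3 * (1 + 4 * κ) * A) ≤ L * (v₀ * (κ / 2)))
    (hLe : 2 * (3 * (1 + 4 * κ) * A) ≤ L * (3 * κ * (1 + 3 * κ)))
    (hLa : -(A * φ ^ k) ≤ La) (hIn : |In| ≤ A * φ ^ k * N) :
    0 ≤ v * (φ ^ (k + 1) * (deriv f s * profile f (1 + 3 * κ) s
        - deriv (profile f (1 + 3 * κ)) s * f s))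
      + profile f (1 + 3 * κ) s * La + 2 * deriv (profile f (1 + 3 * κ)) s * In
      + φ ^ (k + 1) * (deriv (deriv (profile f (1 + 3 * κ))) s * N ^ 2) := by
  obtain ⟨hs, hF₀, hF, hF', hF'', hwr⟩ := h
  have : 0 < s := one_pos.trans_le hs
  have hb : 1 ≤ s ^ κ := Real.one_le_rpow hs hκ.le
  set b := s ^ κ
  set F := profile f (1 + 3 * κ) s
  set F₁ := deriv (profile f (1 + 3 * κ)) s
  set F₂ := deriv (deriv (profile f (1 + 3 * κ))) s
  set w := deriv f s * F - F₁ * f s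
  have hdiffusion : -(3 * (s * b ^ 4) * (A * φ ^ k)) ≤ F * La := by
    nlinarith [mul_le_mul_of_nonneg_left hLa hF₀, mul_nonneg hA (pow_nonneg hφ k)]
  have hcross : -(3 * (1 + 4 * κ) * b ^ 4 * (A * φ ^ k * N)) ≤ F₁ * In := by
    refine (neg_le_neg ?_).trans (neg_abs_le _)
    rw [abs_mul]
    exact mul_le_mul hF' hIn (abs_nonneg _) (by positivity)
  have hconvex : φ ^ (k + 1) * (3 * κ * (1 + 3 * κ) * b ^ 3 / s * N ^ 2) ≤
      φ ^ (k + 1) * (F₂ * N ^ 2) := by gcongr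
  have hreaction : v₀ * (φ ^ (k + 1) * (κ / 2 * (s * b ^ 7))) ≤ v * (φ ^ (k + 1) * w) := by
    have := hv₀.trans hv
    gcongr
  have hkey := mul_one_add_two_mul_le (Y := N / s) (by positivity : 0 ≤ 3 * (1 + 4 * κ) * A) hb
    (by positivity : 0 ≤ v₀ * (κ / 2)) (by positivity : 0 ≤ 3 * κ * (1 + 3 * κ)) hφs hLc hLe
  have hkey' := mul_le_mul_of_nonneg_left hkey (by positivity : 0 ≤ φ ^ k * (s * b ^ 3))
  have hlhs : φ ^ k * (s * b ^ 3) * (3 * (1 + 4 * κ) * A * b * (1 + 2 * (N / s))) =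
      3 * (s * b ^ 4) * (A * φ ^ k) + 12 * κ * (s * b ^ 4) * (A * φ ^ k)
        + 2 * (3 * (1 + 4 * κ) * b ^ 4 * (A * φ ^ k * N)) := by
    field_simp; ring
  have hrhs : φ ^ k * (s * b ^ 3) *
      (φ * (v₀ * (κ / 2) * b ^ 4 + 3 * κ * (1 + 3 * κ) * (N / s) ^ 2)) =
      v₀ * (φ ^ (k + 1) * (κ / 2 * (s * b ^ 7)))
        + φ ^ (k + 1) * (3 * κ * (1 + 3 * κ) * b ^ 3 / s * N ^ 2) := by
    field_simp; ring
  have : 0 ≤ 12 * κ * (s * b ^ 4) * (A * φ ^ k) := by positivity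
  linarith

end HasProfileBounds

lemma exists_forall_lt_pow_mul_profile (hκ : 0 < κ) (hf : ContinuousOn f (Ici 0))
    (hev : ∀ᶠ s in atTop, HasProfileBounds f κ s) {k : ℕ} (hk : 1 + 4 * κ ≤ κ * (k + 1)) (L : ℝ) :
    ∃ M, ∀ φ ∈ Icc (0 : ℝ) 1, ∀ s ≥ 0, M < φ ^ (k + 1) * profile f (1 + 3 * κ) s →
      HasProfileBounds f κ s ∧ L ≤ φ * s ^ κ := by
  obtain ⟨s₀, hs₀⟩ := eventually_atTop.1 hev
  obtain ⟨B, hB⟩ := isCompact_Icc.exists_bound_of_continuousOn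
    ((continuousOn_profile hf (by positivity : 0 ≤ 1 + 3 * κ)).mono
      (fun s (hs : s ∈ Icc 0 s₀) => hs.1))
  refine ⟨max |B| (3 * |L| ^ (k + 1)), fun φ hφ s hs hM => ?_⟩
  obtain ⟨hBM, hLM⟩ := max_lt_iff.1 hM
  have hbounds : HasProfileBounds f κ s := by
    refine hs₀ s (le_of_not_gt fun hss₀ => hBM.not_ge ?_)
    calc φ ^ (k + 1) * profile f (1 + 3 * κ) s
        ≤ φ ^ (k + 1) * |profile f (1 + 3 * κ) s| :=
          mul_le_mul_of_nonneg_left (le_abs_self _) (pow_nonneg hφ.1 _)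
      _ ≤ |profile f (1 + 3 * κ) s| :=
          mul_le_of_le_one_left (abs_nonneg _) (pow_le_one₀ hφ.1 hφ.2)
      _ ≤ |B| := (hB s ⟨hs, hss₀.le⟩).trans (le_abs_self B)
  have hs₁ := hbounds.one_le
  have hpow : s * (s ^ κ) ^ 4 ≤ (s ^ κ) ^ (k + 1) := by
    rw [← rpow_one_add_natCast_mul (one_pos.trans_le hs₁), ← Real.rpow_mul_natCast hs]
    exact Real.rpow_le_rpow_of_exponent_le hs₁ (by push_cast; exact hk)
  refine ⟨hbounds, (le_abs_self L).trans (le_of_lt (lt_of_pow_lt_pow_left₀ (k + 1)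
    (mul_nonneg hφ.1 (Real.rpow_nonneg hs κ)) ?_))⟩
  have hchain : φ ^ (k + 1) * profile f (1 + 3 * κ) s ≤ 3 * (φ * s ^ κ) ^ (k + 1) := by
    calc φ ^ (k + 1) * profile f (1 + 3 * κ) s ≤ φ ^ (k + 1) * (3 * (s ^ κ) ^ (k + 1)) :=
          mul_le_mul_of_nonneg_left (hbounds.le.trans (by gcongr)) (pow_nonneg hφ.1 _)
      _ = 3 * (φ * s ^ κ) ^ (k + 1) := by rw [mul_pow]; ring
  linarith

end Threshold

/-! ### Cutoff functions -/

section Cutoff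

lemma exists_isCompact_split {X : Type*} [TopologicalSpace X] [T2Space X] {Z B : Set X} {x₀ : X}
    (hZ : IsCompact Z) (hB : IsClosed B) (hx₀ : x₀ ∈ Z)
    (hdisj : Disjoint (connectedComponentIn Z x₀) B) :
    ∃ K L, IsCompact K ∧ IsCompact L ∧ K ∪ L = Z ∧ Disjoint K L ∧ x₀ ∈ K ∧ Disjoint K B := by
  have : CompactSpace Z := isCompact_iff_compactSpace.1 hZ
  have hBZ : IsCompact ((↑) ⁻¹' B : Set Z) := (hB.preimage continuous_subtype_val).isCompact
  rw [connectedComponentIn_eq_image hx₀, disjoint_image_left, disjoint_comm,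
    disjoint_iff_inter_eq_empty, connectedComponent_eq_iInter_isClopen] at hdisj
  obtain ⟨F, hF⟩ := hBZ.elim_finite_subfamily_closed _ (fun s => s.2.1.1) hdisj
  set A : Set Z := ⋂ s ∈ F, (s : Set Z)
  have hA : IsClopen A := isClopen_biInter_finset fun s _ => s.2.1
  refine ⟨(↑) '' A, (↑) '' Aᶜ, hA.1.isCompact.image continuous_subtype_val,
    hA.compl.1.isCompact.image continuous_subtype_val, ?_, ?_, ⟨⟨x₀, hx₀⟩, ?_, rfl⟩, ?_⟩
  · rw [← image_union, union_compl_self, image_univ, Subtype.range_coe]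
  · exact (disjoint_image_iff Subtype.val_injective).2 disjoint_compl_right
  · exact mem_iInter₂.2 fun s _ => s.2.2
  · rw [disjoint_image_left, disjoint_comm, disjoint_iff_inter_eq_empty]
    exact hF

/-- `φ` is a `C²` cutoff function with compact support in `Ω` that is locally constant equal to `1`
wherever it meets `V < v₀`, so that all transitions of `φ` take place where `V` is positive. -/
structure IsAdaptedCutoff (Ω : Set (𝔼 n)) (V : 𝔼 n → ℝ) (v₀ : ℝ) (φ : 𝔼 n → ℝ) : Prop where
  contDiff : ContDiff ℝ 2 φ
  hasCompactSupport : HasCompactSupport φ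
  tsupport_subset : tsupport φ ⊆ Ω
  mem_Icc : ∀ x, φ x ∈ Icc 0 1
  le_or_eventuallyEq_one : ∀ x, φ x ≠ 0 → v₀ ≤ V x ∨ φ =ᶠ[𝓝 x] fun _ => 1

lemma exists_isAdaptedCutoff {Ω : Set (𝔼 n)} {V : 𝔼 n → ℝ} {x₀ : 𝔼 n} (hΩ : IsOpen Ω)
    (hΩb : Bornology.IsBounded Ω) (hV : ContinuousOn V (closure Ω))
    (hV₀ : ∀ x ∈ closure Ω, 0 ≤ V x) (hx₀ : x₀ ∈ Ω) (hVx₀ : V x₀ = 0)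
    (hcomp : Disjoint (connectedComponentIn {x ∈ closure Ω | V x = 0} x₀) (frontier Ω)) :
    ∃ φ, ∃ v₀ > 0, IsAdaptedCutoff Ω V v₀ φ ∧ φ =ᶠ[𝓝 x₀] fun _ => 1 := by
  have hZ : IsCompact {x ∈ closure Ω | V x = 0} :=
    hΩb.isCompact_closure.of_isClosed_subset
      (hV.preimage_isClosed_of_isClosed isClosed_closure isClosed_singleton) fun x hx => hx.1
  obtain ⟨K, L, hK, hL, hKL, hdisj, hx₀K, hKΩ⟩ :=
    exists_isCompact_split hZ isClosed_frontier ⟨subset_closure hx₀, hVx₀⟩ hcomp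
  have hKU : K ⊆ Ω \ L := fun x hx => by
    have hxΩ : x ∈ closure Ω := (hKL.subset (.inl hx)).1
    refine ⟨by_contra fun hxn => disjoint_left.1 hKΩ hx ?_, disjoint_left.1 hdisj hx⟩
    exact hΩ.frontier_eq ▸ ⟨hxΩ, hxn⟩
  obtain ⟨K', hK', hKK', hK'U⟩ := exists_compact_between hK (hΩ.sdiff hL.isClosed) hKU
  obtain ⟨φ, hφ₁, hφ₀, hφ⟩ := exists_contMDiffMap_one_nhds_of_subset_interior (n := 2)
    𝓘(ℝ, 𝔼 n) hK.isClosed hKK'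
  have hsupp : Function.support φ ⊆ K' := fun x hx => by_contra fun hxK' => hx (hφ₀ x hxK')
  have htsupp : tsupport φ ⊆ K' := closure_minimal hsupp hK'.isClosed
  have hone : ∀ x ∈ K, φ =ᶠ[𝓝 x] fun _ => 1 := eventually_nhdsSet_iff_forall.1 hφ₁
  have hVpos : ∀ x ∈ K' \ interior {x | φ x = 1}, 0 < V x := by
    rintro x ⟨hxK', hx⟩
    have hxΩ := subset_closure (hK'U hxK').1
    refine (hV₀ x hxΩ).lt_of_ne' fun hVx => ?_
    rcases hKL.superset ⟨hxΩ, hVx⟩ with hxK | hxL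
    · exact hx (mem_interior_iff_mem_nhds.2 (hone x hxK))
    · exact (hK'U hxK').2 hxL
  obtain ⟨v₀, hv₀, hV⟩ := (hK'.diff isOpen_interior).exists_forall_le'
    (hV.mono fun x hx => subset_closure (hK'U hx.1).1) hVpos
  refine ⟨φ, v₀, hv₀, ⟨φ.contMDiff.contDiff, .of_support_subset_isCompact hK' hsupp,
    fun x hx => (hK'U (htsupp hx)).1, hφ, fun x hx => ?_⟩, hone x₀ hx₀K⟩
  by_cases hxi : x ∈ interior {x | φ x = 1}
  · exact .inr (mem_interior_iff_mem_nhds.1 hxi)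
  · exact .inl (hV x ⟨hsupp hx, hxi⟩)

lemma hasCompactSupport_lap {φ : 𝔼 n → ℝ} (hφ : HasCompactSupport φ) :
    HasCompactSupport (lap φ) :=
  .intro hφ fun _ hx => (lap_congr (notMem_tsupport_iff_eventuallyEq.1 hx)).trans (lap_const 0)

lemma exists_bound_gradient_lap_pow {φ : 𝔼 n → ℝ} (hφ : ContDiff ℝ 2 φ)
    (hsupp : HasCompactSupport φ) (hφ₀ : ∀ x, 0 ≤ φ x) (k : ℕ) :
    ∃ A ≥ 0, ∀ x, ‖∇ (fun y => φ y ^ (k + 1)) x‖ ≤ A * φ x ^ k ∧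
      -(A * φ x ^ k) ≤ lap (fun y => φ y ^ (k + 1)) x := by
  obtain ⟨B, hB⟩ := (hsupp.fderiv ℝ).exists_bound_of_continuous
    (hφ.continuous_fderiv two_ne_zero)
  obtain ⟨C, hC⟩ := (hasCompactSupport_lap hsupp).exists_bound_of_continuous (continuous_lap hφ)
  have hderiv : deriv (fun r : ℝ => r ^ (k + 1)) = fun r : ℝ => (k + 1) * r ^ k := by
    ext r; simp
  have hderiv' : ∀ r, 0 ≤ r → 0 ≤ deriv (deriv fun r : ℝ => r ^ (k + 1)) r := fun r hr => by
    rw [hderiv, deriv_const_mul_field, deriv_pow_field]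
    positivity
  refine ⟨(k + 1) * max |B| |C|, by positivity, fun x => ⟨?_, ?_⟩⟩
  · have hgrad : ‖∇ φ x‖ ≤ max |B| |C| := by
      rw [gradient, LinearIsometryEquiv.norm_map]
      exact (hB x).trans ((le_abs_self B).trans (le_max_left _ _))
    have hpow : ‖(k + 1 : ℝ) * φ x ^ k‖ = (k + 1) * φ x ^ k :=
      Real.norm_of_nonneg (mul_nonneg (by positivity) (pow_nonneg (hφ₀ x) k))
    rw [gradient_comp_real (F := fun r => r ^ (k + 1)) (by fun_prop)
      (hφ.differentiable two_ne_zero x), hderiv, norm_smul, hpow, mul_right_comm]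
    gcongr
    exact pow_nonneg (hφ₀ x) k
  · have hlap : -max |B| |C| ≤ lap φ x :=
      neg_le.1 ((neg_le_abs _).trans ((hC x).trans ((le_abs_self C).trans (le_max_right _ _))))
    have hsquare := mul_nonneg (hderiv' (φ x) (hφ₀ x)) (sq_nonneg ‖∇ φ x‖)
    rw [hderiv] at hsquare
    rw [lap_comp (F := fun r => r ^ (k + 1)) (by fun_prop) hφ.contDiffAt, hderiv]
    have := mul_le_mul_of_nonneg_left hlap
      (mul_nonneg (by positivity) (pow_nonneg (hφ₀ x) k) : 0 ≤ (k + 1 : ℝ) * φ x ^ k)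
    linarith

end Cutoff

/-! ### Comparison of the time increments with a multiple of the profile -/

section Comparison

/-- The amount by which `a F(v)` fails to solve the linearised equation: when
`∂ₜv = Δv + V f(v)`, one has `(∂ₜ - Δ - V f'(v)) (a F(v)) = -linearizedDefect f F V a v`. -/
noncomputable def linearizedDefect (f F : ℝ → ℝ) (V a v : 𝔼 n → ℝ) (x : 𝔼 n) : ℝ :=
  V x * (a x * (deriv f (v x) * F (v x) - deriv F (v x) * f (v x))) + F (v x) * lap a x +
    2 * deriv F (v x) * ⟪∇ a x, ∇ v x⟫ + a x * (deriv (deriv F) (v x) * ‖∇ v x‖ ^ 2)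

variable {Ω : Set (𝔼 n)} {f F : ℝ → ℝ} {V a φ : 𝔼 n → ℝ} {T : ℝ} {u : ℝ → 𝔼 n → ℝ} {x : 𝔼 n}
  {t t₀ τ c M δ κ v₀ Vm : ℝ}

lemma lap_mul_comp {v : 𝔼 n → ℝ} (hF : ContDiffAt ℝ 2 F (v x)) (hv : ContDiffAt ℝ 2 v x)
    (ha : ContDiffAt ℝ 2 a x) :
    lap (fun y => a y * F (v y)) x =
      a x * (deriv (deriv F) (v x) * ‖∇ v x‖ ^ 2 + deriv F (v x) * lap v x) +
        2 * deriv F (v x) * ⟪∇ a x, ∇ v x⟫ + F (v x) * lap a x := by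
  have hFv : ContDiffAt ℝ 2 (fun y => F (v y)) x := hF.comp x hv
  rw [lap_mul ha hFv, lap_comp hF hv,
    gradient_comp_real (hF.differentiableAt two_ne_zero) (hv.differentiableAt two_ne_zero),
    real_inner_smul_right]
  ring

namespace IsMonotoneSolution

lemma differentiableAt_mul_comp (S : IsMonotoneSolution Ω f V T u) (ht : t ∈ Ioo 0 T) (hx : x ∈ Ω)
    (hF : DifferentiableAt ℝ F (u t x)) (r : ℝ) :
    DifferentiableAt ℝ (fun s => r * F (u s x)) t :=
  (hF.fun_comp' t (S.differentiableAt t ht x hx)).const_mul r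

lemma deriv_sub_lap_mul_comp (S : IsMonotoneSolution Ω f V T u) (ht : t ∈ Ioo 0 T) (hx : x ∈ Ω)
    (hF : ContDiffAt ℝ 2 F (u t x)) (ha : ContDiffAt ℝ 2 a x) :
    deriv (fun s => a x * F (u s x)) t - lap (fun y => a y * F (u t y)) x =
      V x * deriv f (u t x) * (a x * F (u t x)) - linearizedDefect f F V a (u t) x := by
  have hd : HasDerivAt (fun s => a x * F (u s x))
      (a x * (deriv F (u t x) * deriv (fun s => u s x) t)) t :=
    ((hF.differentiableAt two_ne_zero).hasDerivAt.comp t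
      (S.differentiableAt t ht x hx).hasDerivAt).const_mul (a x)
  rw [lap_mul_comp hF (S.contDiffAt t ht x hx) ha, linearizedDefect, hd.deriv,
    S.deriv_eq t ht x hx]
  ring

lemma mul_deriv_mul_timeQuot_le (S : IsMonotoneSolution Ω f V T u) (hconv : ConvexOn ℝ (Ici 0) f)
    (hV₀ : ∀ x ∈ Ω, 0 ≤ V x) (hτ : 0 < τ) (ht : 0 < t) (htτ : t + τ < T) (hx : x ∈ Ω)
    (hf : DifferentiableAt ℝ f (u t x)) :
    V x * deriv f (u t x) * timeQuot u τ t x ≤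
      deriv (fun s => timeQuot u τ s x) t - lap (timeQuot u τ t) x := by
  have ht₁ : t ∈ Ioo 0 T := ⟨ht, by linarith⟩
  have htangent := deriv_mul_sub_le_of_convexOn hconv (S.nonneg t ht₁ x hx)
    (S.monotoneOn hx ht₁ ⟨by linarith, htτ⟩ (by linarith)) hf
  rw [S.deriv_timeQuot_sub_lap hτ ht htτ hx, mul_assoc]
  refine mul_le_mul_of_nonneg_left ?_ (hV₀ x hx)
  calc deriv f (u t x) * timeQuot u τ t x
      = τ⁻¹ * (deriv f (u t x) * (u (t + τ) x - u t x)) := by rw [timeQuot]; ring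
    _ ≤ τ⁻¹ * (f (u (t + τ) x) - f (u t x)) := by gcongr

lemma mul_timeQuot_sub_lt (S : IsMonotoneSolution Ω f V T u) (hconv : ConvexOn ℝ (Ici 0) f)
    (hV₀ : ∀ x ∈ Ω, 0 ≤ V x) (hδ : 0 ≤ δ) (hτ : 0 < τ) (ht : 0 < t) (htτ : t + τ < T) (hx : x ∈ Ω)
    (hf : DifferentiableAt ℝ f (u t x)) (hF : ContDiffAt ℝ 2 F (u t x)) (ha : ContDiffAt ℝ 2 a x)
    (hdefect : 0 ≤ linearizedDefect f F V a (u t) x) {lam : ℝ} (hlam : V x * deriv f (u t x) < lam)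
    (hneg : timeQuot u τ t x - δ * (a x * F (u t x)) < 0) :
    lam * (timeQuot u τ t x - δ * (a x * F (u t x))) <
      deriv (fun s => timeQuot u τ s x - δ * (a x * F (u s x))) t -
        lap (fun y => timeQuot u τ t y - δ * (a y * F (u t y))) x := by
  have ht₁ : t ∈ Ioo 0 T := ⟨ht, by linarith⟩
  have haF : ContDiffAt ℝ 2 (fun y => a y * F (u t y)) x :=
    ha.mul (hF.comp x (S.contDiffAt t ht₁ x hx))
  have hdF := S.differentiableAt_mul_comp ht₁ hx (hF.differentiableAt two_ne_zero) (a x)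
  have hquot := S.mul_deriv_mul_timeQuot_le hconv hV₀ hτ ht htτ hx hf
  have hprofile := congrArg (δ * ·) (S.deriv_sub_lap_mul_comp ht₁ hx hF ha)
  rw [deriv_fun_sub (S.hasDerivAt_timeQuot hτ ht htτ hx).differentiableAt (hdF.const_mul δ),
    deriv_const_mul_field, lap_sub (S.contDiffAt_timeQuot hτ ht htτ hx)
      (contDiffAt_const.mul haF), lap_const_mul δ haF]
  have hdefect' := mul_nonneg hδ hdefect
  have hlt := mul_lt_mul_of_neg_right hlam hneg
  linarith

lemma exists_linear_coeff_bound (S : IsMonotoneSolution Ω f V T u)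
    (hconv : ConvexOn ℝ (Ici 0) f) (hf : ∀ s > 0, DifferentiableAt ℝ f s)
    (hV₀ : ∀ x ∈ Ω, 0 ≤ V x) (hVm : ∀ x ∈ Ω, V x ≤ Vm) {K : Set (𝔼 n)} (hK : IsCompact K)
    (hKΩ : K ⊆ Ω) (ht : t ∈ Ioo 0 T) :
    ∃ lam, ∀ s ∈ Ioc 0 t, ∀ x ∈ K, 0 < u s x → V x * deriv f (u s x) < lam := by
  obtain ⟨U, hU⟩ := hK.bddAbove_image (f := u t)
    fun x hx => (S.contDiffAt t ht x (hKΩ hx)).continuousAt.continuousWithinAt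
  refine ⟨Vm * |deriv f (max 1 U)| + 1, fun s hs x hx hpos => ?_⟩
  have huU : u s x ≤ max 1 U :=
    ((S.monotoneOn (hKΩ hx) ⟨hs.1, hs.2.trans_lt ht.2⟩ ht hs.2).trans
      (hU (mem_image_of_mem _ hx))).trans (le_max_right _ _)
  have hmono : deriv f (u s x) ≤ |deriv f (max 1 U)| :=
    (monotoneOn_deriv_of_convexOn hconv hf hpos (hpos.trans_le huU) huU).trans (le_abs_self _)
  calc V x * deriv f (u s x) ≤ V x * |deriv f (max 1 U)| :=
        mul_le_mul_of_nonneg_left hmono (hV₀ x (hKΩ hx))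
    _ ≤ Vm * |deriv f (max 1 U)| := by gcongr; exact hVm x (hKΩ hx)
    _ < Vm * |deriv f (max 1 U)| + 1 := lt_add_one _

lemma mul_comp_le_timeQuot (S : IsMonotoneSolution Ω f V T u) (hconv : ConvexOn ℝ (Ici 0) f)
    (hf : ∀ s > 0, DifferentiableAt ℝ f s) (hV₀ : ∀ x ∈ Ω, 0 ≤ V x) (hVm : ∀ x ∈ Ω, V x ≤ Vm)
    (hFc : ContinuousOn F (Ici 0)) (hF : ∀ s > 0, ContDiffAt ℝ 2 F s) (ha : ContDiff ℝ 2 a)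
    (hac : HasCompactSupport a) (haΩ : tsupport a ⊆ Ω) (hM : 0 ≤ M)
    (hdefect : ∀ t ∈ Ioo 0 T, ∀ x ∈ tsupport a, M < a x * F (u t x) →
      0 < u t x ∧ 0 ≤ linearizedDefect f F V a (u t) x)
    (ht₀ : 0 < t₀) (hinit : ∀ x ∈ tsupport a, a x * F (u t₀ x) ≤ M) (hδ : 0 ≤ δ) (hδM : δ * M ≤ c)
    (hτ : 0 < τ) (hc : ∀ t ≥ t₀, t + τ < T → ∀ x ∈ tsupport a, c ≤ timeQuot u τ t x)
    (ht : t₀ ≤ t) (htτ : t + τ < T) (hx : x ∈ tsupport a) :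
    δ * (a x * F (u t x)) ≤ timeQuot u τ t x := by
  have hIoo : ∀ s ∈ Icc t₀ t, s ∈ Ioo 0 T := fun s hs => ⟨ht₀.trans_le hs.1, by linarith [hs.2]⟩
  obtain ⟨lam, hlam⟩ := S.exists_linear_coeff_bound hconv hf hV₀ hVm hac.isCompact haΩ
    (hIoo t ⟨ht, le_rfl⟩)
  have hcont : ContinuousOn (fun z : ℝ × 𝔼 n => timeQuot u τ z.1 z.2 - δ * (a z.2 * F (u z.1 z.2)))
      (Icc t₀ t ×ˢ tsupport a) := by
    have hsub : Icc t₀ t ×ˢ tsupport a ⊆ Ioo 0 T ×ˢ Ω := prod_mono hIoo haΩ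
    refine ((S.continuousOn_timeQuot hτ ht₀ htτ).mono (prod_mono_right haΩ)).sub
      (continuousOn_const.mul ((ha.continuous.comp continuous_snd).continuousOn.mul ?_))
    exact hFc.comp (S.continuousOn_uncurry.mono hsub)
      fun z hz => S.nonneg _ (hsub hz).1 _ (hsub hz).2
  refine sub_nonneg.1 (parabolic_minimum_principle (lam := lam) (a := t₀) (b := t)
    (J := fun t x => timeQuot u τ t x - δ * (a x * F (u t x))) hac.isCompact hcont
    (fun s hs y hy hneg => ?_) t ⟨ht, le_rfl⟩ x hx)
  have hsτ : s + τ < T := by linarith [hs.2]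
  have hyΩ := haΩ hy
  have hbig : M < a y * F (u s y) := by
    by_contra! hle
    linarith [hc s hs.1 hsτ y hy, mul_le_mul_of_nonneg_left hle hδ]
  obtain ⟨hpos, hdef⟩ := hdefect s (hIoo s hs) y hy hbig
  have hs₀ : t₀ < s := hs.1.lt_of_ne fun h => (hinit y hy).not_gt (h ▸ hbig)
  have hay : a y ≠ 0 := fun h => by rw [h, zero_mul] at hbig; exact hM.not_gt hbig
  have hFu := hF _ hpos
  refine ⟨hs₀, interior_maximal subset_closure ha.continuous.isOpen_support hay, ?_, ?_, ?_⟩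
  · exact (S.hasDerivAt_timeQuot hτ (hIoo s hs).1 hsτ hyΩ).differentiableAt.sub
      ((S.differentiableAt_mul_comp (hIoo s hs) hyΩ
        (hFu.differentiableAt two_ne_zero) _).const_mul δ)
  · exact (S.contDiffAt_timeQuot hτ (hIoo s hs).1 hsτ hyΩ).sub (contDiffAt_const.mul
      (ha.contDiffAt.mul (hFu.comp y (S.contDiffAt s (hIoo s hs) y hyΩ))))
  · exact S.mul_timeQuot_sub_lt hconv hV₀ hδ hτ (hIoo s hs).1 hsτ hyΩ (hf _ hpos) hFu ha.contDiffAt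
      hdef (hlam s ⟨(hIoo s hs).1, hs.2⟩ y hy hpos) hneg

end IsMonotoneSolution

lemma linearizedDefect_nonneg_of_eventuallyEq_one {v : 𝔼 n → ℝ} (hκ : 0 < κ) (hv : 0 ≤ V x)
    (ha : a =ᶠ[𝓝 x] fun _ => 1) (h : HasProfileBounds f κ (v x)) :
    0 ≤ linearizedDefect f (profile f (1 + 3 * κ)) V a v x := by
  have hpos : 0 < v x := one_pos.trans_le h.one_le
  have hw := (by positivity : 0 ≤ κ / 2 * (v x * (v x ^ κ) ^ 7)).trans h.le_wronskian
  have hF'' := (by positivity : 0 ≤ 3 * κ * (1 + 3 * κ) * (v x ^ κ) ^ 3 / v x).trans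
    h.le_deriv_deriv
  have hgrad : ∇ a x = 0 := by rw [ha.gradient_eq, gradient_fun_const]
  have hlap : lap a x = 0 := by rw [lap_congr ha, lap_const]
  rw [linearizedDefect, hgrad, hlap, ha.self_of_nhds, inner_zero_left]
  simp only [one_mul, mul_zero, add_zero]
  positivity

lemma IsAdaptedCutoff.linearizedDefect_nonneg (h : IsAdaptedCutoff Ω V v₀ φ) (hκ : 0 < κ)
    (hv₀ : 0 ≤ v₀) {A L : ℝ} {k : ℕ} (hA : 0 ≤ A)
    (hLc : 2 * (3 * (1 + 4 * κ) * A) ≤ L * (v₀ * (κ / 2)))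
    (hLe : 2 * (3 * (1 + 4 * κ) * A) ≤ L * (3 * κ * (1 + 3 * κ)))
    (hgrad : ‖∇ (fun y => φ y ^ (k + 1)) x‖ ≤ A * φ x ^ k)
    (hlap : -(A * φ x ^ k) ≤ lap (fun y => φ y ^ (k + 1)) x) (hφx : φ x ≠ 0) (hVx : 0 ≤ V x)
    {v : 𝔼 n → ℝ} (hv : HasProfileBounds f κ (v x)) (hL : L ≤ φ x * v x ^ κ) :
    0 ≤ linearizedDefect f (profile f (1 + 3 * κ)) V (fun y => φ y ^ (k + 1)) v x := by
  rcases h.le_or_eventuallyEq_one x hφx with hV | hφ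
  · have hinner := (abs_real_inner_le_norm (∇ (fun y => φ y ^ (k + 1)) x) (∇ v x)).trans
      (mul_le_mul_of_nonneg_right hgrad (norm_nonneg _))
    have := hv.drift_nonneg hκ hA hv₀ hV (h.mem_Icc x).1 hL hLc hLe hlap hinner
    rw [linearizedDefect]
    linarith
  · refine linearizedDefect_nonneg_of_eventuallyEq_one hκ hVx ?_ hv
    filter_upwards [hφ] with y hy
    rw [hy, one_pow]

lemma IsAdaptedCutoff.exists_forall_lt_linearizedDefect_nonneg (h : IsAdaptedCutoff Ω V v₀ φ)
    (hκ : 0 < κ) (hv₀ : 0 < v₀) (hV₀ : ∀ x ∈ Ω, 0 ≤ V x) (hf : ContinuousOn f (Ici 0))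
    (hev : ∀ᶠ s in atTop, HasProfileBounds f κ s) :
    ∃ k : ℕ, ∃ M, ∀ v : 𝔼 n → ℝ, ∀ x ∈ Ω, 0 ≤ v x →
      M < φ x ^ (k + 1) * profile f (1 + 3 * κ) (v x) → 0 < v x ∧
        0 ≤ linearizedDefect f (profile f (1 + 3 * κ)) V (fun y => φ y ^ (k + 1)) v x := by
  obtain ⟨k, hk⟩ := exists_nat_ge ((1 + 4 * κ) / κ)
  obtain ⟨A, hA, hbound⟩ := exists_bound_gradient_lap_pow h.contDiff h.hasCompactSupport
    (fun x => (h.mem_Icc x).1) k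
  obtain ⟨L, hLc, hLe⟩ : ∃ L : ℝ, 2 * (3 * (1 + 4 * κ) * A) ≤ L * (v₀ * (κ / 2)) ∧
      2 * (3 * (1 + 4 * κ) * A) ≤ L * (3 * κ * (1 + 3 * κ)) :=
    (((tendsto_id.atTop_mul_const (by positivity)).eventually_ge_atTop _).and
      ((tendsto_id.atTop_mul_const (by positivity)).eventually_ge_atTop _)).exists
  have hk' : 1 + 4 * κ ≤ κ * (k + 1) := by linarith [(div_le_iff₀' hκ).1 hk]
  obtain ⟨M, hM⟩ := exists_forall_lt_pow_mul_profile hκ hf hev hk' L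
  refine ⟨k, max 0 M, fun v x hx hvx hlt => ?_⟩
  have hφx : φ x ≠ 0 := fun h₀ => by
    rw [h₀, zero_pow k.succ_ne_zero, zero_mul] at hlt
    exact (le_max_left 0 M).not_gt hlt
  obtain ⟨hprof, hL⟩ := hM (φ x) (h.mem_Icc x) (v x) hvx ((le_max_right _ _).trans_lt hlt)
  exact ⟨one_pos.trans_le hprof.one_le, h.linearizedDefect_nonneg hκ hv₀.le hA hLc hLe
    (hbound x).1 (hbound x).2 hφx (hV₀ x hx) hprof hL⟩

namespace IsMonotoneSolution

lemma exists_eventually_mul_comp_le_timeQuot (S : IsMonotoneSolution Ω f V T u)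
    (hconv : ConvexOn ℝ (Ici 0) f) (hf : ∀ s > 0, DifferentiableAt ℝ f s)
    (hV₀ : ∀ x ∈ Ω, 0 ≤ V x) (hVm : ∀ x ∈ Ω, V x ≤ Vm) (hFc : ContinuousOn F (Ici 0))
    (hF : ∀ s > 0, ContDiffAt ℝ 2 F s) (ha : ContDiff ℝ 2 a) (hac : HasCompactSupport a)
    (haΩ : tsupport a ⊆ Ω)
    (hdefect : ∀ t ∈ Ioo 0 T, ∀ x ∈ tsupport a, M < a x * F (u t x) →
      0 < u t x ∧ 0 ≤ linearizedDefect f F V a (u t) x)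
    (ht₀ : t₀ ∈ Ioo 0 T) (hinc : IsUniformlyIncreasingOn u T t₀ (tsupport a)) :
    ∃ δ > 0, ∀ᶠ τ in 𝓝[>] (0 : ℝ), ∀ t ≥ t₀, t + τ < T → ∀ x ∈ tsupport a,
      δ * (a x * F (u t x)) ≤ timeQuot u τ t x := by
  obtain ⟨c, hc, hinc⟩ := hinc
  have hcont : ContinuousOn (fun x => a x * F (u t₀ x)) (tsupport a) :=
    ha.continuous.continuousOn.mul (hFc.comp
      (fun x hx => (S.contDiffAt t₀ ht₀ x (haΩ hx)).continuousAt.continuousWithinAt)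
      fun x hx => S.nonneg t₀ ht₀ x (haΩ hx))
  obtain ⟨B, hB⟩ := hac.isCompact.bddAbove_image hcont
  have hM : 0 < max 1 (max M B) := lt_max_of_lt_left one_pos
  refine ⟨c / max 1 (max M B), by positivity, ?_⟩
  filter_upwards [hinc, self_mem_nhdsWithin] with τ hincτ hτ t ht htτ x hx
  refine S.mul_comp_le_timeQuot hconv hf hV₀ hVm hFc hF ha hac haΩ hM.le
    (fun t ht x hx hlt => hdefect t ht x hx ?_) ht₀.1 (fun x hx => ?_) (by positivity)
    (div_mul_cancel₀ _ hM.ne').le hτ hincτ ht htτ hx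
  · exact (le_max_of_le_right (le_max_left _ _)).trans_lt hlt
  · exact le_max_of_le_right (le_max_of_le_right (hB (mem_image_of_mem _ hx)))

lemma le_deriv_of_eventually_le_timeQuot (S : IsMonotoneSolution Ω f V T u) (ht : t ∈ Ioo 0 T)
    (hx : x ∈ Ω) (h : ∀ᶠ τ in 𝓝[>] (0 : ℝ), t + τ < T → c ≤ timeQuot u τ t x) :
    c ≤ deriv (fun s => u s x) t := by
  refine ge_of_tendsto (S.differentiableAt t ht x hx).hasDerivAt.tendsto_slope_zero_right ?_
  filter_upwards [h, Ioo_mem_nhdsGT (sub_pos.2 ht.2)] with τ hle hτ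
  exact hle (by linarith [hτ.2])

lemma exists_mul_profile_le_deriv (S : IsMonotoneSolution Ω f V T u)
    (hconv : ConvexOn ℝ (Ici 0) f) (hfc : ContinuousOn f (Ici 0)) (hf : ∀ s > 0, ContDiffAt ℝ 2 f s)
    (hV₀ : ∀ x ∈ Ω, 0 ≤ V x) (hVm : ∀ x ∈ Ω, V x ≤ Vm) (hκ : 0 < κ)
    (hev : ∀ᶠ s in atTop, HasProfileBounds f κ s) (hφ : IsAdaptedCutoff Ω V v₀ φ) (hv₀ : 0 < v₀)
    (ht₀ : t₀ ∈ Ioo 0 T) (hinc : IsUniformlyIncreasingOn u T t₀ (tsupport φ)) :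
    ∃ δ > 0, ∀ t ∈ Ico t₀ T, ∀ x, φ x = 1 →
      δ * profile f (1 + 3 * κ) (u t x) ≤ deriv (fun s => u s x) t := by
  obtain ⟨k, M, hM⟩ :=
    hφ.exists_forall_lt_linearizedDefect_nonneg hκ hv₀ hV₀ hfc hev
  have hsupp : tsupport (fun x => φ x ^ (k + 1)) = tsupport φ := by
    rw [tsupport, Function.support_pow φ k.succ_ne_zero, tsupport]
  obtain ⟨δ, hδ, hle⟩ := S.exists_eventually_mul_comp_le_timeQuot hconv
    (fun s hs => (hf s hs).differentiableAt two_ne_zero) hV₀ hVm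
    (continuousOn_profile hfc (by positivity : 0 ≤ 1 + 3 * κ))
    (fun s hs => contDiffAt_profile (hf s hs) hs) (hφ.contDiff.pow (k + 1))
    (by rw [HasCompactSupport, hsupp]; exact hφ.hasCompactSupport)
    (hsupp.trans_subset hφ.tsupport_subset)
    (fun t ht x hx => hM (u t) x (hφ.tsupport_subset (hsupp ▸ hx))
      (S.nonneg t ht x (hφ.tsupport_subset (hsupp ▸ hx)))) ht₀ (hsupp.symm ▸ hinc)
  refine ⟨δ, hδ, fun t ht x hx => ?_⟩
  have hxs : x ∈ tsupport φ := subset_closure (by rw [Function.mem_support, hx]; exact one_ne_zero)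
  refine S.le_deriv_of_eventually_le_timeQuot ⟨ht₀.1.trans_le ht.1, ht.2⟩
    (hφ.tsupport_subset hxs) ?_
  filter_upwards [hle] with τ hτ htτ
  simpa [hx] using hτ t ht.1 htτ x (hsupp ▸ hxs)

end IsMonotoneSolution

end Comparison

/-! ### Blowup rate -/

section BlowupRate

lemma antitoneOn_rpow_add_of_mul_rpow_le_deriv {p c : ℝ} {I : Set ℝ} {w : ℝ → ℝ} (hp : 1 ≤ p)
    (hI : Convex ℝ I) (hpos : ∀ s ∈ I, 0 < w s) (hdiff : ∀ s ∈ I, DifferentiableAt ℝ w s)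
    (hle : ∀ s ∈ I, c * w s ^ p ≤ deriv w s) :
    AntitoneOn (fun s => w s ^ (-(p - 1)) + (p - 1) * c * s) I := by
  have hderiv : ∀ s ∈ I, HasDerivAt (fun s => w s ^ (-(p - 1)) + (p - 1) * c * s)
      (deriv w s * -(p - 1) * w s ^ (-(p - 1) - 1) + (p - 1) * c) s := fun s hs => by
    simpa only [mul_one] using ((hdiff s hs).hasDerivAt.rpow_const (p := -(p - 1))
      (.inl (hpos s hs).ne')).fun_add ((hasDerivAt_id' s).const_mul ((p - 1) * c))
  refine antitoneOn_of_deriv_nonpos hI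
    (fun s hs => (hderiv s hs).continuousAt.continuousWithinAt)
    (fun s hs => (hderiv s (interior_subset hs)).differentiableAt.differentiableWithinAt)
    fun s hs => ?_
  replace hs := interior_subset hs
  have hw := hpos s hs
  have hcancel : w s ^ p * w s ^ (-(p - 1) - 1) = 1 := by
    rw [← Real.rpow_add hw, show p + (-(p - 1) - 1) = 0 by ring, Real.rpow_zero]
  have hc : c ≤ deriv w s * w s ^ (-(p - 1) - 1) := by
    calc c = c * w s ^ p * w s ^ (-(p - 1) - 1) := by rw [mul_assoc, hcancel, mul_one]
      _ ≤ deriv w s * w s ^ (-(p - 1) - 1) := by gcongr; exact hle s hs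
  rw [(hderiv s hs).deriv]
  linarith [mul_le_mul_of_nonneg_left hc (sub_nonneg.2 hp)]

lemma le_mul_rpow_of_mul_rpow_le_deriv {p c t T : ℝ} {w : ℝ → ℝ} (hp : 1 < p) (hc : 0 < c)
    (htT : t < T) (hpos : ∀ s ∈ Ico t T, 0 < w s) (hdiff : ∀ s ∈ Ico t T, DifferentiableAt ℝ w s)
    (hle : ∀ s ∈ Ico t T, c * w s ^ p ≤ deriv w s) :
    w t ≤ ((p - 1) * c) ^ (-(1 / (p - 1))) * (T - t) ^ (-(1 / (p - 1))) := by
  have hp₁ : 0 < p - 1 := sub_pos.2 hp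
  have ht : t ∈ Ico t T := ⟨le_rfl, htT⟩
  have hT : 0 < T - t := sub_pos.2 htT
  have hanti := antitoneOn_rpow_add_of_mul_rpow_le_deriv hp.le (convex_Ico t T) hpos hdiff hle
  have hlife : (p - 1) * c * (T - t) ≤ w t ^ (-(p - 1)) := by
    have hlim : Tendsto (fun s => (p - 1) * c * (s - t)) (𝓝[<] T) (𝓝 ((p - 1) * c * (T - t))) :=
      Continuous.continuousWithinAt (by fun_prop)
    refine le_of_tendsto hlim ?_
    filter_upwards [Ioo_mem_nhdsLT htT] with s hs
    have hs' : s ∈ Ico t T := Ioo_subset_Ico_self hs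
    have := hanti ht hs' hs.1.le
    have := Real.rpow_pos_of_pos (hpos s hs') (-(p - 1))
    simp only at *
    linarith
  calc w t = (w t ^ (-(p - 1))) ^ (-(1 / (p - 1))) := by
        rw [← Real.rpow_mul (hpos t ht).le, neg_mul_neg, mul_one_div_cancel hp₁.ne', Real.rpow_one]
    _ ≤ ((p - 1) * c * (T - t)) ^ (-(1 / (p - 1))) :=
        Real.rpow_le_rpow_of_nonpos (by positivity) hlife (by simp [hp₁.le])
    _ = _ := Real.mul_rpow (by positivity) hT.le

lemma one_le_rpow_mul_rpow_neg {T t α : ℝ} (hα : 0 ≤ α) (ht : t ∈ Ioo 0 T) :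
    1 ≤ T ^ α * (T - t) ^ (-α) := by
  have hT : 0 < T - t := sub_pos.2 ht.2
  rw [Real.rpow_neg hT.le, ← div_eq_mul_inv, one_le_div (by positivity)]
  exact Real.rpow_le_rpow hT.le (by linarith [ht.1]) hα

lemma eventually_half_rpow_le {f : ℝ → ℝ} {p : ℝ}
    (hlim : Tendsto (fun s => s ^ (-p) * f s) atTop (𝓝 1)) : ∀ᶠ s in atTop, s ^ p / 2 ≤ f s := by
  filter_upwards [hlim.eventually (lt_mem_nhds one_half_lt_one), eventually_gt_atTop 0]
    with s hs hs₀
  rw [Real.rpow_neg hs₀.le, inv_mul_eq_div, lt_div_iff₀ (by positivity)] at hs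
  linarith

/-- `u` satisfies on `A` the upper bound `M (T - t) ^ (-α)`; the blowup is of type I when
`α = 1 / (p - 1)` is the exponent of the ODE `w' = w ^ p`. -/
def HasBlowupRateOn {X : Type*} (u : ℝ → X → ℝ) (T α : ℝ) (A : Set X) : Prop :=
  ∃ M > 0, ∀ t ∈ Ioo 0 T, ∀ x ∈ A, u t x ≤ M * (T - t) ^ (-α)

lemma hasBlowupRateOn_of_le_or_le {X : Type*} {u : ℝ → X → ℝ} {T α B M : ℝ} {A : Set X}
    (hα : 0 ≤ α) (h : ∀ t ∈ Ioo 0 T, ∀ x ∈ A, u t x ≤ B ∨ u t x ≤ M * (T - t) ^ (-α)) :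
    HasBlowupRateOn u T α A := by
  refine ⟨max 1 (max (B * T ^ α) M), lt_max_of_lt_left one_pos, fun t ht x hx => ?_⟩
  have hT : 0 < T - t := sub_pos.2 ht.2
  have : 0 < T := ht.1.trans ht.2
  rcases h t ht x hx with hB | hM
  · rcases le_total B 0 with hB₀ | hB₀
    · exact (hB.trans hB₀).trans (by positivity)
    calc u t x ≤ B * (T ^ α * (T - t) ^ (-α)) :=
          hB.trans (le_mul_of_one_le_right hB₀ (one_le_rpow_mul_rpow_neg hα ht))
      _ = B * T ^ α * (T - t) ^ (-α) := (mul_assoc _ _ _).symm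
      _ ≤ _ := by gcongr; exact le_max_of_le_right (le_max_left _ _)
  · refine hM.trans ?_
    gcongr
    exact le_max_of_le_right (le_max_right _ _)

variable {Ω : Set (𝔼 n)} {f F : ℝ → ℝ} {V : 𝔼 n → ℝ} {T p : ℝ} {u : ℝ → 𝔼 n → ℝ} {x₀ : 𝔼 n}

namespace IsMonotoneSolution

lemma hasBlowupRateOn_of_mul_le_deriv (S : IsMonotoneSolution Ω f V T u) (hp : 1 < p)
    (hF : ∀ᶠ s in atTop, s ^ p / 2 ≤ F s) {K : Set (𝔼 n)} (hK : IsCompact K) (hKΩ : K ⊆ Ω)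
    {t₀ δ : ℝ} (ht₀ : t₀ ∈ Ioo 0 T) (hδ : 0 < δ) {A : Set (𝔼 n)} (hAK : A ⊆ K)
    (hle : ∀ t ∈ Ico t₀ T, ∀ x ∈ A, δ * F (u t x) ≤ deriv (fun s => u s x) t) :
    HasBlowupRateOn u T (1 / (p - 1)) A := by
  obtain ⟨S₀, hS₀⟩ := eventually_atTop.1 (hF.and (eventually_gt_atTop 0))
  obtain ⟨U, hU⟩ := hK.bddAbove_image (f := u t₀)
    fun x hx => (S.contDiffAt t₀ ht₀ x (hKΩ hx)).continuousAt.continuousWithinAt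
  have hα : 0 ≤ 1 / (p - 1) := one_div_nonneg.2 (sub_pos.2 hp).le
  refine hasBlowupRateOn_of_le_or_le (B := max U S₀)
    (M := ((p - 1) * (δ / 2)) ^ (-(1 / (p - 1)))) hα fun t ht x hx => ?_
  have hxΩ := hKΩ (hAK hx)
  rcases lt_or_ge t t₀ with htt₀ | htt₀
  · exact .inl (le_max_of_le_left ((S.monotoneOn hxΩ ht ht₀ htt₀.le).trans
      (hU (mem_image_of_mem _ (hAK hx)))))
  rcases le_or_gt (u t x) S₀ with hu | hu
  · exact .inl (le_max_of_le_right hu)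
  have hIoo : ∀ s ∈ Ico t T, s ∈ Ioo 0 T := fun s hs => ⟨ht.1.trans_le hs.1, hs.2⟩
  have hlarge : ∀ s ∈ Ico t T, u s x ^ p / 2 ≤ F (u s x) ∧ 0 < u s x := fun s hs =>
    hS₀ _ (hu.le.trans (S.monotoneOn hxΩ ht (hIoo s hs) hs.1))
  refine .inr (le_mul_rpow_of_mul_rpow_le_deriv (w := fun s => u s x) hp (half_pos hδ) ht.2
    (fun s hs => (hlarge s hs).2) (fun s hs => S.differentiableAt s (hIoo s hs) x hxΩ)
    fun s hs => ?_)
  calc δ / 2 * u s x ^ p = δ * (u s x ^ p / 2) := by ring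
    _ ≤ δ * F (u s x) := mul_le_mul_of_nonneg_left (hlarge s hs).1 hδ.le
    _ ≤ _ := hle s ⟨htt₀.trans hs.1, hs.2⟩ x hx

lemma exists_hasBlowupRateOn_of_deriv_nonpos (S : IsMonotoneSolution Ω f V T u) (hT : 0 < T)
    {α : ℝ} (hα : 0 ≤ α) (hx₀ : x₀ ∈ Ω) (h : ∀ t ∈ Ioo 0 T, ∀ x ∈ Ω, deriv (fun s => u s x) t ≤ 0) :
    ∃ A ∈ 𝓝 x₀, A ⊆ Ω ∧ HasBlowupRateOn u T α A := by
  have hmid : T / 2 ∈ Ioo 0 T := ⟨half_pos hT, half_lt_self hT⟩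
  have hconst : ∀ t ∈ Ioo 0 T, ∀ x ∈ Ω, u t x = u (T / 2) x := fun t ht x hx =>
    isOpen_Ioo.is_const_of_deriv_eq_zero isPreconnected_Ioo
      (fun s hs => (S.differentiableAt s hs x hx).differentiableWithinAt)
      (fun s hs => (h s hs x hx).antisymm (S.deriv_nonneg s hs x hx)) ht hmid
  have hnear : ∀ᶠ x in 𝓝 x₀, u (T / 2) x < u (T / 2) x₀ + 1 :=
    (S.contDiffAt _ hmid x₀ hx₀).continuousAt.eventually (gt_mem_nhds (lt_add_one _))
  refine ⟨_, inter_mem hnear (S.isOpen.mem_nhds hx₀), inter_subset_right,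
    hasBlowupRateOn_of_le_or_le (B := u (T / 2) x₀ + 1) (M := 0) hα fun t ht x hx => .inl ?_⟩
  rw [hconst t ht x hx.2]
  exact hx.1.le

lemma exists_isUniformlyIncreasingOn (S : IsMonotoneSolution Ω f V T u) (hΩ : IsPreconnected Ω)
    (hconv : ConvexOn ℝ (Ici 0) f) (hf : ContDiffOn ℝ 2 f (Ici 0)) (hV : ContinuousOn V Ω)
    (hV₀ : ∀ x ∈ Ω, 0 ≤ V x) {Vm : ℝ} (hVm : ∀ x ∈ Ω, V x ≤ Vm) {t : ℝ} {x : 𝔼 n}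
    (ht : t ∈ Ioo 0 T) (hx : x ∈ Ω) (hpos : 0 < deriv (fun s => u s x) t) {K : Set (𝔼 n)}
    (hK : IsCompact K) (hKΩ : K ⊆ Ω) : ∃ t₀ ∈ Ioo 0 T, IsUniformlyIncreasingOn u T t₀ K := by
  obtain ⟨C, hC, hlip⟩ := exists_neg_mul_sub_le_of_convexOn hconv
    (hf.differentiableOn two_ne_zero 0 self_mem_Ici)
  obtain ⟨W, hWΩ, hW, hWne, c, hc, hinit⟩ :=
    S.exists_isOpen_le_timeQuot hf.continuousOn hV ht hx hpos
  obtain ⟨t₀, htt₀, ht₀T⟩ := exists_between ht.2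
  have hVm₀ : 0 ≤ Vm := (hV₀ x hx).trans (hVm x hx)
  exact ⟨t₀, ⟨ht.1.trans htt₀, ht₀T⟩, S.isUniformlyIncreasingOn_of_isCompact hΩ
    (mul_nonneg hVm₀ hC)
    (fun τ hτ s hs hsτ y hy => S.neg_mul_timeQuot_le hC hlip hV₀ hVm hτ hs hsτ hy)
    hW hWΩ hWne ht.1 hc hinit htt₀ hK hKΩ⟩

lemma exists_hasBlowupRateOn_of_deriv_pos (S : IsMonotoneSolution Ω f V T u)
    (hΩ : IsPreconnected Ω) (hΩb : Bornology.IsBounded Ω) (hp : 1 < p)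
    (hconv : ConvexOn ℝ (Ici 0) f) (hf : ContDiffOn ℝ 2 f (Ici 0))
    (hlim : Tendsto (fun s => s ^ (-p) * f s) atTop (𝓝 1)) (hV : ContinuousOn V (closure Ω))
    (hV₀ : ∀ x ∈ closure Ω, 0 ≤ V x) (hx₀ : x₀ ∈ Ω) (hVx₀ : V x₀ = 0)
    (hcomp : Disjoint (connectedComponentIn {x ∈ closure Ω | V x = 0} x₀) (frontier Ω)) {t : ℝ}
    {x : 𝔼 n} (ht : t ∈ Ioo 0 T) (hx : x ∈ Ω) (hpos : 0 < deriv (fun s => u s x) t) :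
    ∃ A ∈ 𝓝 x₀, A ⊆ Ω ∧ HasBlowupRateOn u T (1 / (p - 1)) A := by
  obtain ⟨κ, hκ, rfl⟩ : ∃ κ > 0, p = 1 + 4 * κ := ⟨(p - 1) / 4, by linarith, by ring⟩
  have hf₂ : ∀ s > 0, ContDiffAt ℝ 2 f s := fun s hs => hf.contDiffAt (Ici_mem_nhds hs)
  have hVΩ₀ : ∀ x ∈ Ω, 0 ≤ V x := fun x hx => hV₀ x (subset_closure hx)
  obtain ⟨Vm, hVm⟩ := hΩb.isCompact_closure.bddAbove_image hV
  have hVΩm : ∀ x ∈ Ω, V x ≤ Vm := fun x hx => hVm (mem_image_of_mem _ (subset_closure hx))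
  obtain ⟨φ, v₀, hv₀, hφ, hφ₁⟩ := exists_isAdaptedCutoff S.isOpen hΩb hV hV₀ hx₀ hVx₀ hcomp
  obtain ⟨t₀, ht₀, hinc⟩ := S.exists_isUniformlyIncreasingOn hΩ hconv hf (hV.mono subset_closure)
    hVΩ₀ hVΩm ht hx hpos hφ.hasCompactSupport.isCompact hφ.tsupport_subset
  obtain ⟨δ, hδ, hle⟩ := S.exists_mul_profile_le_deriv hconv hf.continuousOn hf₂ hVΩ₀ hVΩm hκ
    (eventually_hasProfileBounds hκ hf₂ hconv hlim) hφ hv₀ ht₀ hinc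
  have hgrowth : ∀ᶠ s in atTop, s ^ (1 + 4 * κ) / 2 ≤ profile f (1 + 3 * κ) s := by
    filter_upwards [eventually_half_rpow_le hlim, eventually_ge_atTop 0] with s hs hs₀
    exact hs.trans (le_add_of_nonneg_right (Real.rpow_nonneg hs₀ _))
  have hsub : {x | φ x = 1} ⊆ tsupport φ := fun x hx =>
    subset_closure (Function.mem_support.2 (hx.trans_ne one_ne_zero))
  exact ⟨_, hφ₁, hsub.trans hφ.tsupport_subset, S.hasBlowupRateOn_of_mul_le_deriv hp hgrowth
    hφ.hasCompactSupport.isCompact hφ.tsupport_subset ht₀ hδ hsub hle⟩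

end IsMonotoneSolution

end BlowupRate

section Main

lemma continuousOn_of_abs_sub_le_mul_rpow {X : Type*} [SeminormedAddCommGroup X] {g : X → ℝ}
    {s : Set X} {C β : ℝ} (hβ : 0 < β) (h : ∀ x ∈ s, ∀ y ∈ s, |g x - g y| ≤ C * ‖x - y‖ ^ β) :
    ContinuousOn g s := by
  intro x hx
  have hlim : Tendsto (fun y => C * ‖y - x‖ ^ β) (𝓝[s] x) (𝓝 0) := by
    have hcont : Continuous fun y => C * ‖y - x‖ ^ β :=
      continuous_const.mul ((Real.continuous_rpow_const hβ.le).comp (by fun_prop))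
    simpa [Real.zero_rpow hβ.ne'] using (hcont.tendsto x).mono_left nhdsWithin_le_nhds
  exact tendsto_iff_dist_tendsto_zero.2 (squeeze_zero' (.of_forall fun _ => dist_nonneg)
    (eventually_mem_nhdsWithin.mono fun y hy => h y hy x hx) hlim)

theorem stmt13_general {Ω : Set (𝔼 n)} (hΩ_conn : IsPreconnected Ω)
    (hΩ_bdd : Bornology.IsBounded Ω) {p : ℝ} (hp : 1 < p) {f : ℝ → ℝ}
    (hf_C2 : ContDiffOn ℝ 2 f (Ici 0)) (hf_conv : ConvexOn ℝ (Ici 0) f)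
    (hf_lim : Tendsto (fun s : ℝ => s ^ (-p) * f s) atTop (𝓝 1)) {V : 𝔼 n → ℝ}
    (hV_nonneg : ∀ x ∈ closure Ω, 0 ≤ V x) (hV : ContinuousOn V (closure Ω)) {T : ℝ} (hT : 0 < T)
    {u : ℝ → 𝔼 n → ℝ} (S : IsMonotoneSolution Ω f V T u) {x₀ : 𝔼 n} (hx₀ : x₀ ∈ Ω)
    (hVx₀ : V x₀ = 0)
    (hcomp : connectedComponentIn {x ∈ closure Ω | V x = 0} x₀ ∩ frontier Ω = ∅) :
    ∃ M > 0, ∃ ρ > 0, ball x₀ ρ ⊆ Ω ∧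
      ∀ t ∈ Ioo 0 T, ∀ x ∈ ball x₀ ρ, u t x ≤ M * (T - t) ^ (-(1 / (p - 1))) := by
  obtain ⟨A, hA, hAΩ, M, hM, hrate⟩ :
      ∃ A ∈ 𝓝 x₀, A ⊆ Ω ∧ HasBlowupRateOn u T (1 / (p - 1)) A := by
    by_cases! hpos : ∃ t ∈ Ioo 0 T, ∃ x ∈ Ω, 0 < deriv (fun s => u s x) t
    · obtain ⟨t, ht, x, hx, hpos⟩ := hpos
      exact S.exists_hasBlowupRateOn_of_deriv_pos hΩ_conn hΩ_bdd hp hf_conv hf_C2 hf_lim hV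
        hV_nonneg hx₀ hVx₀ (disjoint_iff_inter_eq_empty.2 hcomp) ht hx hpos
    · exact S.exists_hasBlowupRateOn_of_deriv_nonpos hT
        (one_div_nonneg.2 (sub_pos.2 hp).le) hx₀ hpos
  obtain ⟨ρ, hρ, hρA⟩ := Metric.mem_nhds_iff.1 hA
  exact ⟨M, hM, ρ, hρ, hρA.trans hAΩ, fun t ht x hx => hrate t ht x (hρA hx)⟩

end Main

end Development

theorem stmt13
    (n : ℕ) (hn : 1 ≤ n)
    (Ω : Set (EuclideanSpace ℝ (Fin n)))
    (hΩ_open : IsOpen Ω) (hΩ_conn : IsConnected Ω) (hΩ_bdd : Bornology.IsBounded Ω)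
    (p : ℝ) (hp : 1 < p)
    (hpS : 3 ≤ n → p < ((n : ℝ) + 2) / ((n : ℝ) - 2))
    (f : ℝ → ℝ)
    (hf_nonneg : ∀ s ≥ (0:ℝ), 0 ≤ f s)
    (hf_C1 : ContDiffOn ℝ 1 f (Ici 0))
    (hf_C2 : ContDiffOn ℝ 2 f (Ici 0))
    (hf_conv : ConvexOn ℝ (Ici 0) f)
    (hf_lim : Tendsto (fun s : ℝ => s ^ (-p) * f s) atTop (nhds 1))
    (hf_deriv : ∃ C₀ > 0, ∀ s ≥ (0:ℝ), |deriv f s| ≤ C₀ * (1 + s ^ (p - 1)))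
    (V : EuclideanSpace ℝ (Fin n) → ℝ)
    (hV_nonneg : ∀ x ∈ closure Ω, 0 ≤ V x)
    (hV_holder : ∃ C β : ℝ, 0 < β ∧ β ≤ 1 ∧ 0 ≤ C ∧
      ∀ x ∈ closure Ω, ∀ y ∈ closure Ω, |V x - V y| ≤ C * ‖x - y‖ ^ β)
    (T : ℝ) (hT : 0 < T)
    (u : ℝ → EuclideanSpace ℝ (Fin n) → ℝ)
    (hu_nonneg : ∀ t ∈ Ioo 0 T, ∀ x ∈ Ω, 0 ≤ u t x)
    (hu_t : ∀ t ∈ Ioo 0 T, ∀ x ∈ Ω, DifferentiableAt ℝ (fun s => u s x) t)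
    (hu_x : ∀ t ∈ Ioo 0 T, ∀ x ∈ Ω, ContDiffAt ℝ 2 (fun y => u t y) x)
    (heq : ∀ t ∈ Ioo 0 T, ∀ x ∈ Ω,
      deriv (fun s => u s x) t = lap (fun y => u t y) x + V x * f (u t x))
    (hmono : ∀ t ∈ Ioo 0 T, ∀ x ∈ Ω, 0 ≤ deriv (fun s => u s x) t)
    (x₀ : EuclideanSpace ℝ (Fin n)) (hx₀ : x₀ ∈ Ω) (hVx₀ : V x₀ = 0)
    (hcomp : connectedComponentIn {x ∈ closure Ω | V x = 0} x₀ ∩ frontier Ω = ∅)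
    (hblow : ∀ M : ℝ, ∀ ε > 0, ∃ t, T - ε < t ∧ t < T ∧
      ∃ x ∈ Ω, ‖x - x₀‖ < ε ∧ M < u t x) :
    ∃ M > 0, ∃ ρ > 0, ball x₀ ρ ⊆ Ω ∧
      ∀ t ∈ Ioo 0 T, ∀ x ∈ ball x₀ ρ, u t x ≤ M * (T - t) ^ (-(1 / (p - 1))) := by
  exact stmt13_general hΩ_conn.isPreconnected hΩ_bdd hp hf_C2 hf_conv hf_lim hV_nonneg
    (let ⟨_, _, hβ, _, _, hV⟩ := hV_holder; continuousOn_of_abs_sub_le_mul_rpow hβ hV) hT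
    ⟨hΩ_open, hu_nonneg, hu_t, hu_x, heq, hmono⟩ hx₀ hVx₀ hcomp
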